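/- Fix a ∈ ℤ and let b = max{2, |a|+1}. Assume θ ∈ Ḣ^b_⋄ and f ∈ Ḣ^{b−1}_⋄. Then the difference 𝕀_θ − ℒ between the linearized Navier–Stokes flow and the heat flow maps Ḣ^a_⋄ continuously into L²([0,T], Ḣ^{a+2}_⋄) (i.e., although 𝕀_θ and ℒ are each only 1-smoothing, their difference is 2-smoothing). -/

import Mathlib

open MeasureTheory Set
open scoped BigOperators

noncomputable section

namespace NS2D

/-- Nonzero Fourier frequencies of the 2D torus `Ω = 𝕋²`. -/
def Freq : Type := {k : ℤ × ℤ // k ≠ 0}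

/-- Squared Euclidean modulus `|k|²` of a frequency. -/
def knormSq (k : Freq) : ℝ := (k.1.1 : ℝ) ^ 2 + (k.1.2 : ℝ) ^ 2

/-- Eigenvalue `λ_k = 4π²|k|²` of the periodic Laplacian `−Δ`. -/
def lam (k : Freq) : ℝ := 4 * Real.pi ^ 2 * knormSq k

/-- A divergence-free mean-zero vector field `u ∈ Ḣ_⋄` (or, more generally, an
element of the scale `Ḣ^α_⋄`) on the torus is represented by its Fourier
coefficients `c k` along the orthonormal basis
`e_k(x) = |k|⁻¹ (k₂, −k₁) exp(2πi k·x)` of divergence-free fields. -/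
abbrev Coef : Type := Freq → ℂ

/-- Negation of a frequency. -/
def fneg (k : Freq) : Freq := ⟨-k.1, neg_ne_zero.mpr k.2⟩

/-- The conjugacy condition expressing that the coefficients `c` represent a
real-valued vector field (note `e_{−k} = − conj e_k`). -/
def IsReal (c : Coef) : Prop := ∀ k, c (fneg k) = - (starRingEnd ℂ) (c k)

/-- Squared homogeneous Sobolev norm `‖·‖²_{Ḣ^α} = Σ_k λ_k^α |c k|²`. -/
def hSq (α : ℝ) (c : Coef) : ℝ := ∑' k, lam k ^ α * ‖c k‖ ^ 2

/-- Homogeneous Sobolev norm `‖·‖_{Ḣ^α}`. -/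
def hN (α : ℝ) (c : Coef) : ℝ := Real.sqrt (hSq α c)

/-- Finiteness of the `Ḣ^α`-norm. -/
def FinH (α : ℝ) (c : Coef) : Prop := Summable fun k => lam k ^ α * ‖c k‖ ^ 2

/-- Membership in `Ḣ^α_⋄` (real-valued field with finite `Ḣ^α`-norm). -/
def MemH (α : ℝ) (c : Coef) : Prop := IsReal c ∧ FinH α c

/-- Membership in `Ḣ^∞_⋄ = C^∞(Ω)² ∩ Ḣ_⋄`: all Sobolev norms are finite. -/
def MemHinf (c : Coef) : Prop := ∀ α : ℝ, MemH α c

/-- Real `Ḣ^α` inner product `⟨·,·⟩_{Ḣ^α}` (for real-valued fields). -/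
def hInner (α : ℝ) (c d : Coef) : ℝ := ∑' k, lam k ^ α * (c k * (starRingEnd ℂ) (d k)).re

/-- The `L²` inner product. -/
def innerC (c d : Coef) : ℂ := ∑' k, c k * (starRingEnd ℂ) (d k)

/-- The unit vector `(k₂, −k₁)/|k|` spanning the divergence-free direction at
frequency `k`. -/
def evec (k : Freq) : ℝ × ℝ :=
  ((k.1.2 : ℝ) / Real.sqrt (knormSq k), -((k.1.1 : ℝ)) / Real.sqrt (knormSq k))

/-- Euclidean dot product on `ℝ²`. -/
def dotR (a b : ℝ × ℝ) : ℝ := a.1 * b.1 + a.2 * b.2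

/-- A frequency as a real vector. -/
def fvec (k : Freq) : ℝ × ℝ := ((k.1.1 : ℝ), (k.1.2 : ℝ))

/-- Fourier coefficients (along the basis `e_k`) of the Leray-projected
transport nonlinearity `B[u,v] = P[(u·∇)v]`:
`(B[u,v])^(k) · ē_k = 2πi Σ_{m+n=k, n≠0} c_m d_n (e_m·n)(e_n·e_k)`. -/
def Bc (c d : Coef) : Coef := fun k =>
  (((2 * Real.pi : ℝ) : ℂ) * Complex.I) *
    ∑' m : Freq,
      if h : k.1 - m.1 ≠ 0 then
        c m * d ⟨k.1 - m.1, h⟩ *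
          (((dotR (evec m) (fvec ⟨k.1 - m.1, h⟩) *
            dotR (evec ⟨k.1 - m.1, h⟩) (evec k) : ℝ)) : ℂ)
      else 0

/-- The Laplacian `Δ` acting on the scale: `(Δu)^(k) = −λ_k û(k)`. -/
def lapC (c : Coef) : Coef := fun k => -((lam k : ℝ) : ℂ) * c k

/-- Continuity of a trajectory `t ↦ u(t)`, `t ∈ [0,T]`, for the `Ḣ^α`-norm:
`u ∈ C([0,T], Ḣ^α_⋄)`. -/
def ContH (α : ℝ) (T : ℝ) (u : ℝ → Coef) : Prop :=
  ∀ t ∈ Icc (0:ℝ) T, ∀ ε > 0, ∃ δ > 0, ∀ s ∈ Icc (0:ℝ) T,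
    |s - t| < δ → hN α (u s - u t) < ε

/-- Membership `u ∈ L²([0,T], Ḣ^α_⋄)`. -/
def MemL2H (α : ℝ) (T : ℝ) (u : ℝ → Coef) : Prop :=
  (∀ t ∈ Ioc (0:ℝ) T, MemH α (u t)) ∧
    IntegrableOn (fun t => hSq α (u t)) (Ioc 0 T)

/-- `u` is a strong solution on `[0,T]` of the (Leray-projected) periodic 2D
Navier–Stokes equations `du/dt + νAu + B[u,u] = f`, `u(0) = θ`, posed in `Ḣ_⋄`:
the Fourier coefficients satisfy the corresponding system of ODEs on `(0,T]`,
the trajectory is continuous into `Ḣ¹_⋄` (in particular at `t = 0`), and lies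
in `L²([0,T], Ḣ²_⋄)`. -/
structure IsNSSol (ν : ℝ) (f : Coef) (T : ℝ) (θ : Coef) (u : ℝ → Coef) : Prop where
  init : u 0 = θ
  real : ∀ t ∈ Icc (0:ℝ) T, IsReal (u t)
  deriv : ∀ (k : Freq), ∀ t ∈ Ioc (0:ℝ) T,
    HasDerivAt (fun s => u s k)
      (f k - ((ν * lam k : ℝ) : ℂ) * u t k - Bc (u t) (u t) k) t
  contH1 : ContH 1 T u
  memL2H2 : MemL2H 2 T u

/-- `U` solves the linear parabolic equation
`dU/dt − νΔU + B[u₀, U] + B[U, u₁] = g`, `U(0) = ξ`, on `[0,T]`. -/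
structure IsLinPSol (ν : ℝ) (u₀ u₁ : ℝ → Coef) (g : ℝ → Coef) (T : ℝ) (ξ : Coef)
    (U : ℝ → Coef) : Prop where
  init : U 0 = ξ
  real : ∀ t ∈ Icc (0:ℝ) T, IsReal (U t)
  deriv : ∀ (k : Freq), ∀ t ∈ Ioc (0:ℝ) T,
    HasDerivAt (fun s => U s k)
      (g t k - ((ν * lam k : ℝ) : ℂ) * U t k - Bc (u₀ t) (U t) k - Bc (U t) (u₁ t) k) t

/-- `U = 𝕀_θ[ξ]` solves the linearisation of Navier–Stokes along the
trajectory `u₀`: `dU/dt − νΔU + B[u₀,U] + B[U,u₀] = 0`, `U(0) = ξ`. -/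
def IsLinSol (ν : ℝ) (u₀ : ℝ → Coef) (T : ℝ) (ξ : Coef) (U : ℝ → Coef) : Prop :=
  IsLinPSol ν u₀ u₀ (fun _ => 0) T ξ U

/-- The heat semigroup `S_t = e^{νtΔ}` on the scale `Ḣ^α_⋄`. -/
def heatS (ν t : ℝ) (c : Coef) : Coef := fun k =>
  ((Real.exp (-(ν * lam k * t)) : ℝ) : ℂ) * c k

/-- Duhamel representation of the solution of the periodic heat equation
`du/dt − νΔu = g`, `u(0) = h`. -/
def heatSol (ν : ℝ) (g : ℝ → Coef) (h : Coef) : ℝ → Coef := fun t k =>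
  ((Real.exp (-(ν * lam k * t)) : ℝ) : ℂ) *
    (h k + ∫ s in (0:ℝ)..t, ((Real.exp (ν * lam k * s) : ℝ) : ℂ) * g s k)

/-- Real-linearity of a map on the coefficient space. -/
def IsLinMap (Λ : Coef → Coef) : Prop :=
  (∀ c d, Λ (c + d) = Λ c + Λ d) ∧ ∀ (r : ℝ) (c : Coef), Λ (r • c) = r • Λ c

/-- `Λ` defines a compact (linear) operator `Ḣ^α_⋄ → Ḣ^β_⋄`: it is linear,
maps `Ḣ^α_⋄` into `Ḣ^β_⋄`, and the image of the `Ḣ^α`-unit ball is totally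
bounded for the `Ḣ^β`-norm. -/
def IsCompactOp (α β : ℝ) (Λ : Coef → Coef) : Prop :=
  IsLinMap Λ ∧ (∀ c, MemH α c → MemH β (Λ c)) ∧
    ∀ ε > 0, ∃ S : Finset Coef, ∀ c, MemH α c → hN α c ≤ 1 →
      ∃ s ∈ S, hN β (Λ c - s) < ε

/-- The index `a* = |a|+1` if `|a| ≤ 1`, `a* = |a|` if `|a| ≥ 2`. -/
def astar (a : ℤ) : ℤ := if |a| ≤ 1 then |a| + 1 else |a|

/-- `i`-th component of the unit vector `evec k`. -/
def evecC (i : Fin 2) (k : Freq) : ℝ := if i = 0 then (evec k).1 else (evec k).2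

/-- Fourier coefficients (over all of `ℤ²`) of the scalar component `u_i` of a
divergence-free field with coefficients `c`. -/
def compCoef (i : Fin 2) (c : Coef) : ℤ × ℤ → ℂ := fun n =>
  if h : n ≠ 0 then c ⟨n, h⟩ * ((evecC i ⟨n, h⟩ : ℝ) : ℂ) else 0

/-- Convolution: Fourier coefficients of a pointwise product of two scalar
functions. -/
def convC (F G : ℤ × ℤ → ℂ) : ℤ × ℤ → ℂ := fun n => ∑' m : ℤ × ℤ, F m * G (n - m)

/-- Squared homogeneous Sobolev norm of a scalar function given by its Fourier
coefficients over `ℤ²`. -/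
def hSqScalar (α : ℝ) (F : ℤ × ℤ → ℂ) : ℝ := ∑' k : Freq, lam k ^ α * ‖F k.1‖ ^ 2

/-- `‖u vᵀ‖²_{Ḣ^α} = Σ_{i,j=1}^2 ‖u_i v_j‖²_{Ḣ^α}`. -/
def hSqMat (α : ℝ) (c d : Coef) : ℝ :=
  ∑ i : Fin 2, ∑ j : Fin 2, hSqScalar α (convC (compCoef i c) (compCoef j d))

/-- The character `exp(2πi k·x)`. -/
def efun (k : Freq) (x : ℝ × ℝ) : ℂ :=
  Complex.exp ((((2 * Real.pi : ℝ)) : ℂ) * Complex.I *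
    ((k.1.1 : ℂ) * (x.1 : ℂ) + (k.1.2 : ℂ) * (x.2 : ℂ)))

/-- Pointwise evaluation of the `i`-th component of the field. -/
def evalComp (i : Fin 2) (c : Coef) (x : ℝ × ℝ) : ℂ :=
  ∑' k, c k * ((evecC i k : ℝ) : ℂ) * efun k x

/-- Supremum norm (`C⁰`-norm) of the field. -/
def c0N (c : Coef) : ℝ := ⨆ x : ℝ × ℝ, max ‖evalComp 0 c x‖ ‖evalComp 1 c x‖

/-- The partial derivative `∂_j` acting on divergence-free fields. -/
def pderiv (j : Fin 2) (c : Coef) : Coef := fun k =>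
  (((2 * Real.pi : ℝ) : ℂ) * Complex.I) *
    (if j = 0 then ((k.1.1 : ℤ) : ℂ) else ((k.1.2 : ℤ) : ℂ)) * c k

/-- `C¹`-norm of the field. -/
def c1N (c : Coef) : ℝ := c0N c + c0N (pderiv 0 c) + c0N (pderiv 1 c)

/-- Norm of the multiplier space `B^ℓ`: `C^ℓ(Ω)²` for `ℓ ≤ 1` and `Ḣ^ℓ` for
`ℓ ≥ 2`. -/
def bN (ℓ : ℕ) (c : Coef) : ℝ :=
  if ℓ = 0 then c0N c else if ℓ = 1 then c1N c else hN (ℓ : ℝ) c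

end NS2D

namespace NS2D

section Helpers
open scoped ENNReal

instance : Countable Freq := by unfold Freq; infer_instance

def rt (k : Freq) : ℝ := Real.sqrt (lam k)

lemma knormSq_ge (k : Freq) : 1 ≤ knormSq k := by
  obtain ⟨⟨a, b⟩, h⟩ := k
  simp only [knormSq]
  have : (1 : ℤ) ≤ a ^ 2 + b ^ 2 := by
    by_contra hc
    have ha : a ^ 2 = 0 := by nlinarith [sq_nonneg a, sq_nonneg b]
    have hb : b ^ 2 = 0 := by nlinarith [sq_nonneg a, sq_nonneg b]
    apply h
    simp only [pow_eq_zero_iff (two_ne_zero)] at ha hb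
    simp [ha, hb]
  exact_mod_cast this

lemma lam_pos (k : Freq) : 0 < lam k := by
  have := knormSq_ge k
  unfold lam; positivity

lemma lam_ge (k : Freq) : 1 ≤ lam k := by
  have := knormSq_ge k
  have := Real.pi_gt_three
  unfold lam; nlinarith

lemma rt_eq (k : Freq) : rt k = 2 * Real.pi * Real.sqrt (knormSq k) := by
  have h : lam k = (2 * Real.pi) ^ 2 * knormSq k := by unfold lam; ring
  rw [rt, h, Real.sqrt_mul (by positivity), Real.sqrt_sq (by positivity)]

lemma rt_ge (k : Freq) : 1 ≤ rt k := by
  rw [rt]; exact Real.one_le_sqrt.mpr (lam_ge k)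

lemma rt_pos (k : Freq) : 0 < rt k := lt_of_lt_of_le one_pos (rt_ge k)

lemma rt_sq (k : Freq) : rt k ^ 2 = lam k := Real.sq_sqrt (lam_pos k).le

lemma rt_rpow_sq (k : Freq) (s : ℝ) : (rt k ^ s) ^ 2 = lam k ^ s := by
  rw [← rt_sq, ← Real.rpow_natCast, ← Real.rpow_natCast, ← Real.rpow_mul (rt_pos k).le,
    ← Real.rpow_mul (rt_pos k).le, mul_comm]

def fsub (k m : Freq) (h : k.1 - m.1 ≠ 0) : Freq := ⟨k.1 - m.1, h⟩

lemma knorm_eq (k : Freq) : Real.sqrt (knormSq k) = ‖(⟨k.1.1, k.1.2⟩ : ℂ)‖ := by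
  rw [Complex.norm_def, knormSq, Complex.normSq_apply]
  congr 1; simp only; ring

lemma rt_tri (k m n : Freq) (h : k.1 = m.1 + n.1) : rt k ≤ rt m + rt n := by
  simp only [rt_eq, knorm_eq]
  rw [← mul_add]
  have : (⟨k.1.1, k.1.2⟩ : ℂ) = ⟨m.1.1, m.1.2⟩ + ⟨n.1.1, n.1.2⟩ := by
    rw [h]; apply Complex.ext <;> simp
  rw [this]
  have := norm_add_le (⟨m.1.1, m.1.2⟩ : ℂ) ⟨n.1.1, n.1.2⟩
  have := Real.pi_pos
  gcongr

lemma rt_fneg (k : Freq) : rt (fneg k) = rt k := by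
  simp [rt, lam, knormSq, fneg]

lemma lam_fneg (k : Freq) : lam (fneg k) = lam k := by
  simp [lam, knormSq, fneg]

lemma dot_sq_le (a b : ℝ × ℝ) : dotR a b ^ 2 ≤ (a.1^2 + a.2^2) * (b.1^2+b.2^2) := by
  unfold dotR; nlinarith [sq_nonneg (a.1 * b.2 - a.2 * b.1)]

lemma evec_sq (k : Freq) : (evec k).1 ^ 2 + (evec k).2 ^ 2 = 1 := by
  have h := knormSq_ge k
  have hs : Real.sqrt (knormSq k) ^ 2 = knormSq k := Real.sq_sqrt (by linarith)
  simp only [evec, div_pow, hs, neg_sq]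
  rw [← add_div, div_eq_one_iff_eq (by linarith), knormSq]; ring

lemma coef_le (k m n : Freq) (h : k.1 = m.1 + n.1) :
    2 * Real.pi * |dotR (evec m) (fvec n) * dotR (evec n) (evec k)| ≤ rt k := by
  have h1 : dotR (evec m) (fvec n) = dotR (evec m) (fvec k) := by
    simp only [dotR, evec, fvec, h, Prod.fst_add, Prod.snd_add]
    push_cast; ring
  rw [h1, abs_mul, rt_eq]
  have h2 : |dotR (evec m) (fvec k)| ≤ Real.sqrt (knormSq k) := by
    apply Real.abs_le_sqrt
    refine (dot_sq_le _ _).trans ?_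
    rw [evec_sq, one_mul]; rfl
  have h3 : |dotR (evec n) (evec k)| ≤ 1 := by
    rw [← sq_le_one_iff_abs_le_one]
    refine (dot_sq_le _ _).trans ?_
    rw [evec_sq, evec_sq, one_mul]
  have := Real.pi_pos
  have : |dotR (evec m) (fvec k)| * |dotR (evec n) (evec k)| ≤ Real.sqrt (knormSq k) * 1 :=
    mul_le_mul h2 h3 (abs_nonneg _) (Real.sqrt_nonneg _)
  rw [mul_one] at this
  gcongr

/-- `ℝ≥0∞`-valued squared Sobolev norm. -/
def E (s : ℝ) (c : Coef) : ℝ≥0∞ := ∑' k, (ENNReal.ofReal (rt k ^ s) * ‖c k‖ₑ) ^ 2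

lemma term_eq (s : ℝ) (c : Coef) (k : Freq) :
    ((ENNReal.ofReal (rt k ^ s) * ‖c k‖ₑ) ^ 2) = ENNReal.ofReal (lam k ^ s * ‖c k‖ ^ 2) := by
  rw [← ofReal_norm, ← ENNReal.ofReal_mul (by have := rt_pos k; positivity),
    ← ENNReal.ofReal_pow (by have := rt_pos k; positivity), mul_pow, rt_rpow_sq]

lemma hSq_eq (s : ℝ) (c : Coef) : hSq s c = (E s c).toReal := by
  unfold hSq E
  simp only [term_eq]
  rw [ENNReal.tsum_toReal_eq (fun _ => ENNReal.ofReal_ne_top)]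
  refine tsum_congr fun k => ?_
  rw [ENNReal.toReal_ofReal]
  have := lam_pos k; positivity

lemma finH_iff (s : ℝ) (c : Coef) : FinH s c ↔ E s c ≠ ⊤ := by
  unfold FinH E
  simp only [term_eq]
  constructor
  · intro h; exact h.tsum_ofReal_ne_top
  · intro h
    have := ENNReal.summable_toReal h
    refine this.congr fun k => ?_
    rw [ENNReal.toReal_ofReal]
    have := lam_pos k; positivity

lemma E_mono {s s' : ℝ} (h : s ≤ s') (c : Coef) : E s c ≤ E s' c := by
  unfold E
  refine ENNReal.tsum_le_tsum fun k => ?_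
  gcongr
  exact rt_ge k

lemma sq_add_le (x y : ℝ≥0∞) : (x + y) ^ 2 ≤ 2 * (x ^ 2 + y ^ 2) := by
  have := ENNReal.rpow_add_le_mul_rpow_add_rpow x y (p := 2) (by norm_num)
  norm_num at this
  exact_mod_cast this

lemma E_add (s : ℝ) (c d : Coef) : E s (c + d) ≤ 2 * (E s c + E s d) := by
  unfold E
  rw [← ENNReal.tsum_add, ← ENNReal.tsum_mul_left]
  refine ENNReal.tsum_le_tsum fun k => ?_
  refine le_trans ?_ (sq_add_le _ _)
  rw [← mul_add]
  gcongr
  exact enorm_add_le _ _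

lemma E_neg (s : ℝ) (c : Coef) : E s (-c) = E s c := by
  unfold E; simp

lemma E_sub (s : ℝ) (c d : Coef) : E s (c - d) ≤ 2 * (E s c + E s d) := by
  rw [sub_eq_add_neg, ← E_neg s d]; exact E_add _ _ _

lemma E_of_sub (s : ℝ) (c d : Coef) : E s c ≤ 2 * (E s (c - d) + E s d) := by
  have := E_add s (c - d) d
  simpa using this

/-- Cauchy–Schwarz. -/
lemma cs_lintegral {α : Type*} [MeasurableSpace α] (μ : Measure α) {f g : α → ℝ≥0∞}
    (hf : AEMeasurable f μ) (hg : AEMeasurable g μ) :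
    (∫⁻ a, f a * g a ∂μ) ^ 2 ≤ (∫⁻ a, f a ^ 2 ∂μ) * (∫⁻ a, g a ^ 2 ∂μ) := by
  have := ENNReal.lintegral_mul_le_Lp_mul_Lq μ Real.HolderConjugate.two_two hf hg
  simp only [Pi.mul_apply, ENNReal.rpow_two] at this
  refine (pow_le_pow_left' this 2).trans_eq ?_
  rw [mul_pow, ← ENNReal.rpow_mul_natCast, ← ENNReal.rpow_mul_natCast]
  norm_num

lemma cs_tsum {ι : Type*} (f g : ι → ℝ≥0∞) :
    (∑' i, f i * g i) ^ 2 ≤ (∑' i, f i ^ 2) * (∑' i, g i ^ 2) := by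
  let _ : MeasurableSpace ι := ⊤
  have := cs_lintegral (Measure.count : Measure ι) (f := f) (g := g)
    (measurable_from_top.aemeasurable) (measurable_from_top.aemeasurable)
  simpa only [lintegral_count' (measurable_from_top)] using this

/-- Extension by zero to all of `ℤ²`. -/
def ext0 (g : Freq → ℝ≥0∞) (n : ℤ × ℤ) : ℝ≥0∞ := if h : n ≠ 0 then g ⟨n, h⟩ else 0

lemma tsum_ext0 (g : Freq → ℝ≥0∞) : ∑' n, ext0 g n = ∑' k, g k := by
  have : ∑' k : Freq, ext0 g k.1 = ∑' n, ext0 g n := by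
    apply Function.Injective.tsum_eq (f := ext0 g) (g := fun k : Freq => k.1)
      Subtype.val_injective
    intro n hn
    simp only [Function.mem_support, ext0] at hn
    by_cases h : n ≠ 0
    · exact ⟨⟨n, h⟩, rfl⟩
    · simp [h] at hn
  rw [← this]
  refine tsum_congr fun k => ?_
  unfold ext0
  rw [dif_pos k.2]; rfl

lemma tsum_ext0_left (g : Freq → ℝ≥0∞) (m : ℤ × ℤ) :
    ∑' k : Freq, ext0 g (k.1 - m) ≤ ∑' k, g k := by
  rw [← tsum_ext0 g]
  exact ENNReal.tsum_comp_le_tsum_of_injective (f := fun k : Freq => k.1 - m)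
    (fun a b h => Subtype.ext (sub_left_injective h)) _

lemma tsum_ext0_right (g : Freq → ℝ≥0∞) (k : ℤ × ℤ) :
    ∑' m : Freq, ext0 g (k - m.1) ≤ ∑' k, g k := by
  rw [← tsum_ext0 g]
  exact ENNReal.tsum_comp_le_tsum_of_injective (f := fun m : Freq => k - m.1)
    (fun a b h => Subtype.ext (sub_right_injective h)) _

lemma ext0_sq (g : Freq → ℝ≥0∞) (n : ℤ × ℤ) : ext0 g n ^ 2 = ext0 (fun k => g k ^ 2) n := by
  unfold ext0; split_ifs <;> simp

lemma conv_sq (f g : Freq → ℝ≥0∞) :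
    ∑' k : Freq, ∑' m : Freq, f m ^ 2 * ext0 g (k.1 - m.1) ^ 2
      ≤ (∑' k, f k ^ 2) * ∑' k, g k ^ 2 := by
  rw [ENNReal.tsum_comm, ← ENNReal.tsum_mul_right]
  refine ENNReal.tsum_le_tsum fun m => ?_
  rw [ENNReal.tsum_mul_left]
  refine mul_le_mul' le_rfl ?_
  simp only [ext0_sq]
  exact tsum_ext0_left _ _

lemma conv_bound (f g w : Freq → ℝ≥0∞) :
    ∑' k : Freq, (∑' m : Freq, f m * ext0 g (k.1 - m.1) *
      (w m + ext0 w (k.1 - m.1) + w k)) ^ 2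
      ≤ 10 * (∑' k, w k ^ 2) * ((∑' k, f k ^ 2) * ∑' k, g k ^ 2) := by
  have key : ∀ k : Freq, (∑' m : Freq, f m * ext0 g (k.1 - m.1) *
      (w m + ext0 w (k.1 - m.1) + w k)) ^ 2 ≤
      8 * ((∑' k, w k ^ 2) * ∑' m : Freq, f m ^ 2 * ext0 g (k.1 - m.1) ^ 2) +
      2 * ((∑' k, f k ^ 2) * (∑' k, g k ^ 2)) * w k ^ 2 := by
    intro k
    simp only [mul_add]
    rw [ENNReal.tsum_add, ENNReal.tsum_add]
    set A := ∑' m : Freq, f m * ext0 g (k.1 - m.1) * w m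
    set B := ∑' m : Freq, f m * ext0 g (k.1 - m.1) * ext0 w (k.1 - m.1)
    set D := ∑' m : Freq, f m * ext0 g (k.1 - m.1) * w k with hD
    set R := ∑' m : Freq, f m ^ 2 * ext0 g (k.1 - m.1) ^ 2 with hR
    have hA : A ^ 2 ≤ (∑' k, w k ^ 2) * R := by
      refine (cs_tsum _ _).trans ?_
      simp only [mul_pow]
      rw [mul_comm]
    have hB : B ^ 2 ≤ (∑' k, w k ^ 2) * R := by
      refine (cs_tsum _ _).trans ?_
      simp only [mul_pow]
      rw [mul_comm]
      refine mul_le_mul' ?_ le_rfl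
      simp only [ext0_sq]
      exact tsum_ext0_right _ _
    have hDD : D ^ 2 ≤ ((∑' k, f k ^ 2) * (∑' k, g k ^ 2)) * w k ^ 2 := by
      rw [hD, ENNReal.tsum_mul_right, mul_pow]
      refine mul_le_mul' ?_ le_rfl
      refine (cs_tsum _ _).trans ?_
      refine mul_le_mul' le_rfl ?_
      simp only [ext0_sq]
      exact tsum_ext0_right _ _
    calc (A + B + D) ^ 2 ≤ 2 * ((A + B) ^ 2 + D ^ 2) := sq_add_le _ _
      _ ≤ 2 * (2 * (A ^ 2 + B ^ 2) + D ^ 2) := by gcongr; exact sq_add_le _ _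
      _ ≤ 2 * (2 * ((∑' k, w k ^ 2) * R + (∑' k, w k ^ 2) * R) +
          ((∑' k, f k ^ 2) * (∑' k, g k ^ 2)) * w k ^ 2) := by gcongr
      _ = _ := by ring
  refine (ENNReal.tsum_le_tsum key).trans ?_
  rw [ENNReal.tsum_add, ENNReal.tsum_mul_left, ENNReal.tsum_mul_left, ENNReal.tsum_mul_left]
  calc _ ≤ 8 * ((∑' k, w k ^ 2) * ((∑' k, f k ^ 2) * ∑' k, g k ^ 2)) +
      2 * ((∑' k, f k ^ 2) * (∑' k, g k ^ 2)) * ∑' k, w k ^ 2 := by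
        gcongr; exact conv_sq f g
    _ = _ := by ring

/-- Weight inequality. -/
def WI (C τ p q : ℝ) : Prop := ∀ x y z : ℝ, 1 ≤ x → 1 ≤ y → 1 ≤ z → x ≤ y + z → y ≤ x + z →
  z ≤ x + y → x ^ τ ≤ C * (z ^ p * y ^ q * (z ^ (-(3/2) : ℝ) + y ^ (-(3/2) : ℝ) + x ^ (-(3/2) : ℝ)))

lemma WI.symm {C τ p q : ℝ} (h : WI C τ p q) : WI C τ q p := by
  intro x y z hx hy hz h1 h2 h3
  have := h x z y hx hz hy (by linarith) (by linarith) (by linarith)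
  refine this.trans_eq ?_
  ring

lemma wi_core {x y z p σ : ℝ} (hx : 1 ≤ x) (hy : 1 ≤ y) (hz : 1 ≤ z) (h : x ≤ y + z)
    (hσ : 0 ≤ σ) (hσp : σ ≤ p) (hp : 3/2 ≤ p) :
    x ^ σ ≤ 2 ^ p * (z ^ p * y ^ σ * (z ^ (-(3/2) : ℝ) + y ^ (-(3/2) : ℝ))) := by
  have hx0 : 0 < x := by linarith
  have hy0 : 0 < y := by linarith
  have hz0 : 0 < z := by linarith
  have h2 : (2:ℝ) ^ σ ≤ 2 ^ p := Real.rpow_le_rpow_of_exponent_le (by norm_num) hσp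
  rcases le_total z y with hzy | hyz
  · have h1 : x ^ σ ≤ 2 ^ σ * y ^ σ := by
      rw [← Real.mul_rpow (by norm_num) hy0.le]
      exact Real.rpow_le_rpow hx0.le (by linarith) hσ
    have h3 : 1 ≤ z ^ p * z ^ (-(3/2) : ℝ) := by
      rw [← Real.rpow_add hz0]; exact Real.one_le_rpow hz (by linarith)
    calc x ^ σ ≤ 2 ^ σ * y ^ σ := h1
      _ ≤ 2 ^ p * (y ^ σ * 1) := by rw [mul_one]; gcongr
      _ ≤ 2 ^ p * (y ^ σ * (z ^ p * z ^ (-(3/2) : ℝ))) := by gcongr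
      _ = 2 ^ p * (z ^ p * y ^ σ * (z ^ (-(3/2) : ℝ) + 0)) := by ring
      _ ≤ _ := by gcongr; positivity
  · have h1 : x ^ σ ≤ 2 ^ σ * z ^ σ := by
      rw [← Real.mul_rpow (by norm_num) hz0.le]
      exact Real.rpow_le_rpow hx0.le (by linarith) hσ
    have h3 : z ^ σ ≤ z ^ p * (y ^ σ * y ^ (-(3/2) : ℝ)) := by
      rw [← Real.rpow_add hy0]
      have : z ^ σ = z ^ p * z ^ (σ - p) := by rw [← Real.rpow_add hz0]; congr 1; ring
      rw [this]
      gcongr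
      calc z ^ (σ - p) ≤ y ^ (σ - p) :=
            Real.rpow_le_rpow_of_nonpos hy0 hyz (by linarith)
        _ ≤ _ := Real.rpow_le_rpow_of_exponent_le hy (by linarith)
    calc x ^ σ ≤ 2 ^ σ * z ^ σ := h1
      _ ≤ 2 ^ p * (z ^ p * (y ^ σ * y ^ (-(3/2) : ℝ))) := by gcongr
      _ = 2 ^ p * (z ^ p * y ^ σ * (0 + y ^ (-(3/2) : ℝ))) := by ring
      _ ≤ _ := by gcongr; positivity

lemma wi_A {p τ : ℝ} (hτ : |τ| ≤ p) (hp : 3/2 ≤ p) : WI (2 ^ p) τ p τ := by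
  intro x y z hx hy hz h1 h2 h3
  have hx0 : 0 < x := by linarith
  have hy0 : 0 < y := by linarith
  have hz0 : 0 < z := by linarith
  rcases le_total 0 τ with h | h
  · rw [abs_of_nonneg h] at hτ
    refine (wi_core hx hy hz h1 h hτ hp).trans ?_
    have : 0 ≤ x ^ (-(3/2) : ℝ) := by positivity
    refine mul_le_mul_of_nonneg_left (mul_le_mul_of_nonneg_left ?_ (by positivity)) (by positivity)
    linarith
  · rw [abs_of_nonpos h] at hτ
    have := wi_core hy hx hz h2 (by linarith : 0 ≤ -τ) hτ hp
    have e1 : x ^ τ * x ^ (-τ) = 1 := by rw [← Real.rpow_add hx0]; simp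
    have e2 : y ^ τ * y ^ (-τ) = 1 := by rw [← Real.rpow_add hy0]; simp
    calc x ^ τ = (x ^ τ * y ^ τ) * y ^ (-τ) := by rw [mul_assoc, e2, mul_one]
      _ ≤ (x ^ τ * y ^ τ) * (2 ^ p * (z ^ p * x ^ (-τ) * (z ^ (-(3/2) : ℝ) + x ^ (-(3/2) : ℝ)))) := by
          gcongr
      _ = (x ^ τ * x ^ (-τ)) * (2 ^ p * (z ^ p * y ^ τ * (z ^ (-(3/2) : ℝ) + x ^ (-(3/2) : ℝ)))) := by
          ring
      _ = 2 ^ p * (z ^ p * y ^ τ * (z ^ (-(3/2) : ℝ) + 0 + x ^ (-(3/2) : ℝ))) := by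
          rw [e1]; ring
      _ ≤ _ := by gcongr; positivity

lemma wi_B_core {x y z s : ℝ} (hx : 1 ≤ x) (hy : 1 ≤ y) (hz : 1 ≤ z) (h : x ≤ y + z)
    (hs : 1 ≤ s) (hyz : y ≤ z) :
    x ^ (s - 1/2) ≤ 2 ^ s * (z ^ s * y ^ s * y ^ (-(3/2) : ℝ)) := by
  have hx0 : 0 < x := by linarith
  have hy0 : 0 < y := by linarith
  have hz0 : 0 < z := by linarith
  have h1 : x ^ (s - 1/2) ≤ 2 ^ (s - 1/2) * z ^ (s - 1/2) := by
    rw [← Real.mul_rpow (by norm_num) hz0.le]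
    exact Real.rpow_le_rpow hx0.le (by linarith) (by linarith)
  have h2 : (2:ℝ) ^ (s - 1/2) ≤ 2 ^ s := Real.rpow_le_rpow_of_exponent_le (by norm_num) (by linarith)
  have h3 : z ^ (s - 1/2) ≤ z ^ s * (y ^ s * y ^ (-(3/2) : ℝ)) := by
    rw [← Real.rpow_add hy0]
    have : z ^ (s - 1/2) = z ^ s * z ^ (-(1/2) : ℝ) := by rw [← Real.rpow_add hz0]; congr 1
    rw [this]
    gcongr
    calc z ^ (-(1/2) : ℝ) ≤ y ^ (-(1/2) : ℝ) :=
          Real.rpow_le_rpow_of_nonpos hy0 hyz (by norm_num)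
      _ ≤ _ := Real.rpow_le_rpow_of_exponent_le hy (by linarith)
  calc x ^ (s - 1/2) ≤ 2 ^ (s - 1/2) * z ^ (s - 1/2) := h1
    _ ≤ 2 ^ s * (z ^ s * (y ^ s * y ^ (-(3/2) : ℝ))) := by gcongr
    _ = _ := by ring

lemma wi_B {s : ℝ} (hs : 1 ≤ s) : WI (2 ^ s) (s - 1/2) s s := by
  intro x y z hx hy hz h1 h2 h3
  have hx0 : 0 < x := by linarith
  have hy0 : 0 < y := by linarith
  have hz0 : 0 < z := by linarith
  have ex : 0 ≤ x ^ (-(3/2) : ℝ) := by positivity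
  have ey : 0 ≤ y ^ (-(3/2) : ℝ) := by positivity
  have ez : 0 ≤ z ^ (-(3/2) : ℝ) := by positivity
  rcases le_total y z with h | h
  · refine (wi_B_core hx hy hz h1 hs h).trans ?_
    gcongr
    linarith
  · refine (wi_B_core hx hz hy (by linarith) hs h).trans ?_
    rw [mul_comm (y ^ s)]
    gcongr
    linarith

def wgt (k : Freq) : ℝ≥0∞ := ENNReal.ofReal (rt k ^ (-(3/2) : ℝ))

lemma wgt_sum : ∑' k, wgt k ^ 2 ≠ ⊤ := by
  have h0 := EisensteinSeries.summable_one_div_norm_rpow (k := 3) (by norm_num)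
  have h1 : Summable fun k : Freq => ‖(![k.1.1, k.1.2] : Fin 2 → ℤ)‖ ^ (-3 : ℝ) := by
    refine h0.comp_injective (i := fun k : Freq => (![k.1.1, k.1.2] : Fin 2 → ℤ)) ?_
    intro a b hab
    have e0 := congrFun hab 0
    have e1 := congrFun hab 1
    simp at e0 e1
    exact Subtype.ext (Prod.ext e0 e1)
  have h2 : Summable fun k : Freq => (rt k ^ (-(3/2) : ℝ)) ^ 2 := by
    refine Summable.of_nonneg_of_le (fun k => by positivity) (fun k => ?_) h1
    have hr := rt_pos k
    rw [← Real.rpow_natCast, ← Real.rpow_mul hr.le]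
    norm_num
    have hb : ‖(![k.1.1, k.1.2] : Fin 2 → ℤ)‖ ≤ rt k := by
      rw [pi_norm_le_iff_of_nonneg hr.le]
      have hpi := Real.pi_gt_three
      have hh : Real.sqrt (knormSq k) ≤ rt k := by
        rw [rt_eq]; nlinarith [Real.sqrt_nonneg (knormSq k)]
      intro i
      refine le_trans ?_ hh
      fin_cases i
      · simp [Int.norm_eq_abs]; apply Real.abs_le_sqrt; unfold knormSq; nlinarith [sq_nonneg (k.1.2:ℝ)]
      · simp [Int.norm_eq_abs]; apply Real.abs_le_sqrt; unfold knormSq; nlinarith [sq_nonneg (k.1.1:ℝ)]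
    have hpos : 0 < ‖(![k.1.1, k.1.2] : Fin 2 → ℤ)‖ := by
      rw [norm_pos_iff]
      intro h
      have e0 := congrFun h 0
      have e1 := congrFun h 1
      simp at e0 e1
      exact k.2 (Prod.ext e0 e1)
    gcongr
  unfold wgt
  have : ∀ k, ENNReal.ofReal (rt k ^ (-(3/2) : ℝ)) ^ 2 = ENNReal.ofReal ((rt k ^ (-(3/2) : ℝ)) ^ 2) := by
    intro k; rw [ENNReal.ofReal_pow]; have := rt_pos k; positivity
  simp only [this]
  exact h2.tsum_ofReal_ne_top

lemma Bc_term_le {C τ p q : ℝ} (h : WI C τ p q) (hC : 0 ≤ C) (c d : Coef) (k : Freq) :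
    ENNReal.ofReal (rt k ^ (τ - 1)) * ‖Bc c d k‖ₑ ≤
      ENNReal.ofReal C * ∑' m : Freq, (ENNReal.ofReal (rt m ^ p) * ‖c m‖ₑ) *
        ext0 (fun n => ENNReal.ofReal (rt n ^ q) * ‖d n‖ₑ) (k.1 - m.1) *
        (wgt m + ext0 wgt (k.1 - m.1) + wgt k) := by
  unfold Bc
  rw [enorm_mul, ← mul_assoc]
  refine (mul_le_mul_right enorm_tsum_le_tsum_enorm _).trans ?_
  rw [← ENNReal.tsum_mul_left, ← ENNReal.tsum_mul_left]
  refine ENNReal.tsum_le_tsum fun m => ?_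
  by_cases hn : k.1 - m.1 ≠ 0
  · simp only [dif_pos hn, ext0]
    set n : Freq := ⟨k.1 - m.1, hn⟩ with hnd
    have hk : k.1 = m.1 + n.1 := by simp [hnd]
    have t1 := rt_tri k m n hk
    have t2 : rt n ≤ rt k + rt m := by
      have := rt_tri n k (fneg m) (by simp [hk, fneg])
      rwa [rt_fneg] at this
    have t3 : rt m ≤ rt k + rt n := by
      have := rt_tri m k (fneg n) (by simp [hk, fneg])
      rwa [rt_fneg] at this
    have hw := h (rt k) (rt n) (rt m) (rt_ge k) (rt_ge n) (rt_ge m) (by linarith) t2 t3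
    have hc := coef_le k m n hk
    have pk := rt_pos k
    have pm := rt_pos m
    have pn := rt_pos n
    unfold wgt
    simp only [← ofReal_norm, norm_mul, Complex.norm_I, Complex.norm_real, mul_one]
    set cf := dotR (evec m) (fvec n) * dotR (evec n) (evec k) with hcf
    rw [← ENNReal.ofReal_add (by positivity) (by positivity),
      ← ENNReal.ofReal_add (by positivity) (by positivity)]
    rw [← ENNReal.ofReal_mul (by positivity), ← ENNReal.ofReal_mul (by positivity),
      ← ENNReal.ofReal_mul (by positivity), ← ENNReal.ofReal_mul (by positivity),
      ← ENNReal.ofReal_mul (by positivity), ← ENNReal.ofReal_mul (by positivity),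
      ← ENNReal.ofReal_mul (by positivity)]
    apply ENNReal.ofReal_le_ofReal
    have e : rt k ^ (τ - 1) * rt k = rt k ^ τ := by
      nth_rewrite 2 [← Real.rpow_one (rt k)]
      rw [← Real.rpow_add pk]; congr 1; ring
    have hpi : ‖2 * Real.pi‖ = 2 * Real.pi := by
      rw [Real.norm_eq_abs, abs_of_pos (by positivity)]
    rw [← norm_mul (2:ℝ), ← norm_mul (dotR _ _), ← hcf, hpi, Real.norm_eq_abs]
    calc rt k ^ (τ - 1) * (2 * Real.pi) * (‖c m‖ * ‖d n‖ * |cf|)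
        = (rt k ^ (τ - 1) * (2 * Real.pi * |cf|)) * (‖c m‖ * ‖d n‖) := by ring
      _ ≤ (rt k ^ (τ - 1) * rt k) * (‖c m‖ * ‖d n‖) := by gcongr
      _ ≤ (C * (rt m ^ p * rt n ^ q * (rt m ^ (-(3/2) : ℝ) + rt n ^ (-(3/2) : ℝ) +
            rt k ^ (-(3/2) : ℝ)))) * (‖c m‖ * ‖d n‖) := by rw [e]; gcongr
      _ = _ := by ring
  · simp [ext0, hn]

lemma Bc_bound {C τ p q : ℝ} (h : WI C τ p q) (hC : 0 ≤ C) :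
    ∃ K : ℝ≥0∞, K ≠ ⊤ ∧ ∀ c d, E (τ - 1) (Bc c d) ≤ K * (E p c * E q d) := by
  refine ⟨ENNReal.ofReal C ^ 2 * (10 * ∑' k, wgt k ^ 2), ?_, ?_⟩
  · exact ENNReal.mul_ne_top (by simp) (ENNReal.mul_ne_top (by simp) wgt_sum)
  · intro c d
    unfold E
    refine (ENNReal.tsum_le_tsum fun k => pow_le_pow_left' (Bc_term_le h hC c d k) 2).trans ?_
    simp only [mul_pow (ENNReal.ofReal C)]
    rw [ENNReal.tsum_mul_left, mul_assoc]
    gcongr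
    exact conv_bound _ _ _

end Helpers

end NS2D

namespace NS2D

section Helpers2
open scoped ENNReal

lemma lint_ftc {F f : ℝ → ℝ} {a b : ℝ} (hab : a ≤ b) (hc : ContinuousOn F (Icc a b))
    (hd : ∀ x ∈ Ioo a b, HasDerivAt F (f x) x) (hf : ∀ x ∈ Ioc a b, 0 ≤ f x) :
    ∫⁻ x in Ioc a b, ENNReal.ofReal (f x) = ENNReal.ofReal (F b - F a) := by
  have hi : IntegrableOn f (Ioc a b) := intervalIntegral.integrableOn_deriv_of_nonneg hc hd
    (fun x hx => hf x ⟨hx.1, hx.2.le⟩)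
  rw [← ofReal_integral_eq_lintegral_ofReal hi
    ((ae_restrict_mem measurableSet_Ioc).mono fun x hx => hf x hx),
    ← intervalIntegral.integral_of_le hab,
    intervalIntegral.integral_eq_sub_of_hasDerivAt_of_le hab hc hd
      ((intervalIntegrable_iff_integrableOn_Ioc_of_le hab).mpr hi)]

lemma lint_exp1 {μ a b : ℝ} (hμ : 0 < μ) (hab : a ≤ b) :
    ∫⁻ s in Ioc a b, ENNReal.ofReal (Real.exp (-(μ * (b - s)))) ≤ ENNReal.ofReal (1 / μ) := by
  have hd : ∀ x, HasDerivAt (fun s => Real.exp (-(μ * (b - s))) / μ)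
      (Real.exp (-(μ * (b - x)))) x := by
    intro x
    have h1 : HasDerivAt (fun s => -(μ * (b - s))) μ x := by
      have := (((hasDerivAt_id x).const_sub b).const_mul μ).fun_neg
      simpa using this
    have := h1.exp.div_const μ
    rwa [mul_div_cancel_right₀ _ hμ.ne'] at this
  rw [lint_ftc hab (fun x _ => (hd x).continuousAt.continuousWithinAt) (fun x _ => hd x)
    (fun x _ => (Real.exp_pos _).le)]
  apply ENNReal.ofReal_le_ofReal
  have : 0 ≤ Real.exp (-(μ * (b - a))) / μ := by positivity
  simp only [sub_self, mul_zero, neg_zero, Real.exp_zero]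
  linarith

lemma lint_exp2 {μ a b : ℝ} (hμ : 0 < μ) (hab : a ≤ b) :
    ∫⁻ t in Ioc a b, ENNReal.ofReal (Real.exp (-(μ * (t - a)))) ≤ ENNReal.ofReal (1 / μ) := by
  have hd : ∀ x, HasDerivAt (fun s => -(Real.exp (-(μ * (s - a))) / μ))
      (Real.exp (-(μ * (x - a)))) x := by
    intro x
    have h1 : HasDerivAt (fun s => -(μ * (s - a))) (-μ) x := by
      have := (((hasDerivAt_id x).sub_const a).const_mul μ).fun_neg
      simpa using this
    have := (h1.exp.div_const μ).fun_neg
    rw [mul_neg, neg_div, neg_neg, mul_div_cancel_right₀ _ hμ.ne'] at this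
    exact this
  rw [lint_ftc hab (fun x _ => (hd x).continuousAt.continuousWithinAt) (fun x _ => hd x)
    (fun x _ => (Real.exp_pos _).le)]
  apply ENNReal.ofReal_le_ofReal
  have : 0 ≤ Real.exp (-(μ * (b - a))) / μ := by positivity
  simp only [sub_self, mul_zero, neg_zero, Real.exp_zero]
  linarith

lemma lint_sing {a b T : ℝ} (ha : 0 ≤ a) (hab : a ≤ b) (hb : b ≤ T) :
    ∫⁻ s in Ioc a b, ENNReal.ofReal ((b - s) ^ (-(3/4) : ℝ)) ≤
      ENNReal.ofReal (4 * T ^ (1/4 : ℝ)) := by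
  have hd : ∀ x ∈ Ioo a b, HasDerivAt (fun s => -(4 * (b - s) ^ (1/4 : ℝ)))
      ((b - x) ^ (-(3/4) : ℝ)) x := by
    intro x hx
    have h1 : HasDerivAt (fun s => b - s) (-1) x := by
      simpa using (hasDerivAt_id x).const_sub b
    have := ((h1.rpow_const (p := 1/4) (Or.inl (by linarith [hx.2]))).const_mul 4).fun_neg
    convert! this using 1
    norm_num
    ring
  have hc : ContinuousOn (fun s => -(4 * (b - s) ^ (1/4 : ℝ))) (Icc a b) := by
    apply Continuous.continuousOn
    refine (continuous_const.mul ?_).neg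
    exact (continuous_const.sub continuous_id).rpow_const (fun _ => Or.inr (by norm_num))
  rw [lint_ftc hab hc hd (fun x hx => Real.rpow_nonneg (by linarith [hx.2]) _)]
  apply ENNReal.ofReal_le_ofReal
  simp only [sub_self]
  rw [Real.zero_rpow (by norm_num)]
  have : (b - a) ^ (1/4 : ℝ) ≤ T ^ (1/4 : ℝ) :=
    Real.rpow_le_rpow (by linarith) (by linarith) (by norm_num)
  linarith

lemma enorm_sub_le_lint {z z' : ℝ → ℂ} {a b : ℝ} (hab : a ≤ b) (hc : ContinuousOn z (Icc a b))
    (hd : ∀ x ∈ Ioc a b, HasDerivAt z (z' x) x) :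
    ‖z b - z a‖ₑ ≤ ∫⁻ s in Ioc a b, ‖z' s‖ₑ := by
  by_cases htop : ∫⁻ s in Ioc a b, ‖z' s‖ₑ = ⊤
  · rw [htop]; exact le_top
  have hm : AEStronglyMeasurable z' (volume.restrict (Ioc a b)) := by
    refine (stronglyMeasurable_deriv z).aestronglyMeasurable.congr ?_
    exact (ae_restrict_mem measurableSet_Ioc).mono fun x hx => (hd x hx).deriv
  have hi : IntegrableOn z' (Ioc a b) := ⟨hm, lt_top_iff_ne_top.mpr htop⟩
  rw [← intervalIntegral.integral_eq_sub_of_hasDerivAt_of_le hab hc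
    (fun x hx => hd x ⟨hx.1, hx.2.le⟩) ((intervalIntegrable_iff_integrableOn_Ioc_of_le hab).mpr hi),
    intervalIntegral.integral_of_le hab]
  exact enorm_integral_le_lintegral_enorm _

lemma star_scalar {y g : ℝ → ℂ} {μ a b : ℝ} (hμ : 0 < μ) (hab : a ≤ b)
    (hc : ContinuousOn y (Icc a b))
    (hd : ∀ x ∈ Ioc a b, HasDerivAt y (g x - (μ : ℂ) * y x) x)
    (hg : AEMeasurable g (volume.restrict (Ioc a b))) :
    ‖y b - (Real.exp (-(μ * (b - a))) : ℂ) * y a‖ₑ ^ 2 ≤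
      ENNReal.ofReal (1 / μ) * ∫⁻ s in Ioc a b, ENNReal.ofReal (Real.exp (-(μ * (b - s)))) *
        ‖g s‖ₑ ^ 2 := by
  have hE : ∀ x : ℝ, HasDerivAt (fun s : ℝ => ((Real.exp (-(μ * (b - s))) : ℝ) : ℂ))
      (((Real.exp (-(μ * (b - x))) : ℝ) : ℂ) * (μ : ℂ)) x := by
    intro x
    have h1 : HasDerivAt (fun s => -(μ * (b - s))) μ x := by
      have := (((hasDerivAt_id x).const_sub b).const_mul μ).fun_neg
      simpa using this
    have := h1.exp.ofReal_comp
    simpa using this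
  have hz : ∀ x ∈ Ioc a b, HasDerivAt (fun s => ((Real.exp (-(μ * (b - s))) : ℝ) : ℂ) * y s)
      (((Real.exp (-(μ * (b - x))) : ℝ) : ℂ) * g x) x := by
    intro x hx
    convert! (hE x).mul (hd x hx) using 1
    ring
  have hzc : ContinuousOn (fun s => ((Real.exp (-(μ * (b - s))) : ℝ) : ℂ) * y s) (Icc a b) :=
    ContinuousOn.mul (fun x _ => (hE x).continuousAt.continuousWithinAt) hc
  have h1 := enorm_sub_le_lint hab hzc hz
  simp only [sub_self, mul_zero, neg_zero, Real.exp_zero, Complex.ofReal_one, one_mul] at h1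
  have h2 : ∀ s, ‖((Real.exp (-(μ * (b - s))) : ℝ) : ℂ) * g s‖ₑ =
      ENNReal.ofReal (Real.exp (-(μ * (b - s)) / 2)) *
        (ENNReal.ofReal (Real.exp (-(μ * (b - s)) / 2)) * ‖g s‖ₑ) := by
    intro s
    rw [← mul_assoc, ← ENNReal.ofReal_mul (Real.exp_pos _).le, ← Real.exp_add, add_halves,
      enorm_mul]
    congr 1
    rw [← ofReal_norm, Complex.norm_real, Real.norm_eq_abs, abs_of_pos (Real.exp_pos _)]
  have h3 : ∀ s, ENNReal.ofReal (Real.exp (-(μ * (b - s)) / 2)) ^ 2 =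
      ENNReal.ofReal (Real.exp (-(μ * (b - s)))) := by
    intro s
    rw [sq, ← ENNReal.ofReal_mul (Real.exp_pos _).le, ← Real.exp_add, add_halves]
  have hme : Measurable (fun s => ENNReal.ofReal (Real.exp (-(μ * (b - s)) / 2))) := by fun_prop
  simp only [h2] at h1
  refine (pow_le_pow_left' h1 2).trans ?_
  refine (cs_lintegral _ hme.aemeasurable (hme.aemeasurable.mul hg.enorm)).trans ?_
  simp only [Pi.mul_apply, mul_pow, h3]
  exact mul_le_mul' (lint_exp1 hμ hab) le_rfl

lemma young_scalar {h : ℝ → ℝ≥0∞} {μ T : ℝ} (hμ : 0 < μ)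
    (hh : AEMeasurable h (volume.restrict (Ioc 0 T))) :
    ∫⁻ t in Ioc 0 T, ∫⁻ s in Ioc 0 t, ENNReal.ofReal (Real.exp (-(μ * (t - s)))) * h s ≤
      ENNReal.ofReal (1 / μ) * ∫⁻ s in Ioc 0 T, h s := by
  have e1 : ∀ t ∈ Ioc 0 T, ∫⁻ s in Ioc 0 t, ENNReal.ofReal (Real.exp (-(μ * (t - s)))) * h s =
      ∫⁻ s in Ioc 0 T, (if s ≤ t then ENNReal.ofReal (Real.exp (-(μ * (t - s)))) else 0) * h s := by
    intro t ht
    have : Ioc 0 t = Iic t ∩ Ioc 0 T := by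
      ext s; simp only [mem_Ioc, mem_inter_iff, mem_Iic]
      constructor
      · rintro ⟨h1, h2⟩; exact ⟨h2, h1, h2.trans ht.2⟩
      · rintro ⟨h1, h2, _⟩; exact ⟨h2, h1⟩
    rw [this, ← Measure.restrict_restrict measurableSet_Iic, ← lintegral_indicator measurableSet_Iic]
    refine lintegral_congr fun s => ?_
    simp only [indicator, mem_Iic]
    split_ifs <;> simp
  rw [setLIntegral_congr_fun measurableSet_Ioc e1]
  have hk : Measurable (fun p : ℝ × ℝ =>
      (if p.2 ≤ p.1 then ENNReal.ofReal (Real.exp (-(μ * (p.1 - p.2)))) else 0)) := by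
    refine Measurable.ite (measurableSet_le measurable_snd measurable_fst) (by fun_prop) (by fun_prop)
  rw [lintegral_lintegral_swap (hk.aemeasurable.mul hh.comp_snd)]
  rw [← lintegral_const_mul'' _ hh]
  refine setLIntegral_mono' measurableSet_Ioc fun s hs => ?_
  have hks : Measurable (fun t : ℝ =>
      (if s ≤ t then ENNReal.ofReal (Real.exp (-(μ * (t - s)))) else 0)) :=
    hk.comp (measurable_id.prodMk measurable_const)
  rw [lintegral_mul_const'' _ hks.aemeasurable]
  refine mul_le_mul' ?_ le_rfl
  refine le_trans ?_ (lint_exp2 hμ hs.2)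
  have : Ioc s T = Ioi s ∩ Ioc 0 T := by
    ext t; simp only [mem_Ioc, mem_inter_iff, mem_Ioi]
    constructor
    · rintro ⟨h1, h2⟩; exact ⟨h1, hs.1.trans h1, h2⟩
    · rintro ⟨h1, _, h2⟩; exact ⟨h1, h2⟩
  rw [this, ← Measure.restrict_restrict measurableSet_Ioi, ← lintegral_indicator measurableSet_Ioi]
  refine lintegral_mono_ae ?_
  have : ∀ᵐ t ∂(volume.restrict (Ioc 0 T)), t ≠ s :=
    ae_restrict_of_ae (Measure.ae_ne volume s)
  filter_upwards [this] with t ht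
  simp only [indicator, mem_Ioi]
  by_cases h1 : s ≤ t
  · have : s < t := lt_of_le_of_ne h1 (Ne.symm ht)
    simp [this, h1]
  · simp [h1]

/-- Coefficientwise forced heat equation. -/
structure Duh (ν T : ℝ) (y g : ℝ → Coef) : Prop where
  cont : ∀ k, ContinuousOn (fun t => y t k) (Icc 0 T)
  der : ∀ k, ∀ t ∈ Ioc (0:ℝ) T,
    HasDerivAt (fun s => y s k) (g t k - ((ν * lam k : ℝ) : ℂ) * y t k) t

namespace Duh
variable {ν T : ℝ} {y g : ℝ → Coef}

lemma meas_y (h : Duh ν T y g) (k : Freq) :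
    AEMeasurable (fun t => y t k) (volume.restrict (Ioc 0 T)) :=
  ((h.cont k).mono Ioc_subset_Icc_self).aemeasurable measurableSet_Ioc

lemma meas_g (h : Duh ν T y g) (k : Freq) :
    AEMeasurable (fun t => g t k) (volume.restrict (Ioc 0 T)) := by
  have h1 : AEMeasurable (fun t => deriv (fun s => y s k) t + ((ν * lam k : ℝ) : ℂ) * y t k)
      (volume.restrict (Ioc 0 T)) :=
    (measurable_deriv _).aemeasurable.add ((h.meas_y k).const_mul _)
  refine h1.congr ?_
  refine (ae_restrict_mem measurableSet_Ioc).mono fun t ht => ?_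
  simp only [(h.der k t ht).deriv]
  ring

lemma meas_heat (c : Coef) (k : Freq) : Measurable (fun t => heatS ν t c k) := by
  unfold heatS; fun_prop

lemma meas_E (h : Duh ν T y g) (s : ℝ) :
    AEMeasurable (fun t => E s (y t - heatS ν t (y 0))) (volume.restrict (Ioc 0 T)) := by
  unfold E
  refine AEMeasurable.tsum fun k => ?_
  exact ((((h.meas_y k).sub (meas_heat (y 0) k).aemeasurable).enorm).const_mul _).pow_const 2

lemma meas_Eg (h : Duh ν T y g) (s : ℝ) :
    AEMeasurable (fun t => E s (g t)) (volume.restrict (Ioc 0 T)) := by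
  unfold E
  refine AEMeasurable.tsum fun k => ?_
  exact (((h.meas_g k).enorm).const_mul _).pow_const 2

lemma star (h : Duh ν T y g) (hν : 0 < ν) {t0 t : ℝ} (h0 : 0 ≤ t0) (h1 : t0 ≤ t) (h2 : t ≤ T)
    (k : Freq) :
    ‖(y t - heatS ν (t - t0) (y t0)) k‖ₑ ^ 2 ≤ ENNReal.ofReal (1 / (ν * lam k)) *
      ∫⁻ s in Ioc t0 t, ENNReal.ofReal (Real.exp (-(ν * lam k * (t - s)))) * ‖g s k‖ₑ ^ 2 := by
  have hs : Ioc t0 t ⊆ Ioc 0 T := Ioc_subset_Ioc h0 h2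
  have := star_scalar (y := fun t => y t k) (g := fun t => g t k)
    (mul_pos hν (lam_pos k)) h1 ((h.cont k).mono (Icc_subset_Icc h0 h2))
    (fun x hx => h.der k x (hs hx)) ((h.meas_g k).mono_measure (Measure.restrict_mono hs le_rfl))
  exact this

lemma sq_ofReal_rt (k : Freq) (s : ℝ) :
    ENNReal.ofReal (rt k ^ s) ^ 2 = ENNReal.ofReal (lam k ^ s) := by
  rw [← ENNReal.ofReal_pow (by have := rt_pos k; positivity), rt_rpow_sq]

lemma exp_bound {x : ℝ} (hx : 0 < x) : Real.exp (-x) ≤ x ^ (-(3/4) : ℝ) := by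
  rw [Real.rpow_neg hx.le, Real.exp_neg]
  refine inv_anti₀ (by positivity) ?_
  rcases le_total x 1 with h | h
  · exact (Real.rpow_le_one hx.le h (by norm_num)).trans (Real.one_le_exp hx.le)
  · calc x ^ (3/4 : ℝ) ≤ x ^ (1:ℝ) := Real.rpow_le_rpow_of_exponent_le h (by norm_num)
      _ = x := Real.rpow_one x
      _ ≤ Real.exp x := by linarith [Real.add_one_le_exp x]

lemma smoothing (hν : 0 < ν) (T : ℝ) : ∃ K : ℝ≥0∞, K ≠ ⊤ ∧ ∀ (y g : ℝ → Coef), Duh ν T y g →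
    ∀ (σ t0 t : ℝ) (M : ℝ≥0∞), 0 ≤ t0 → t0 ≤ t → t ≤ T → (∀ s ∈ Ioc t0 t, E σ (g s) ≤ M) →
    E (σ + 7/4) (y t - heatS ν (t - t0) (y t0)) ≤ K * M := by
  refine ⟨ENNReal.ofReal (ν ^ (-(7/4) : ℝ)) * ENNReal.ofReal (4 * T ^ (1/4 : ℝ)),
    ENNReal.mul_ne_top ENNReal.ofReal_ne_top ENNReal.ofReal_ne_top, ?_⟩
  intro y g h σ t0 t M h0 h1 h2 hM
  have hs : Ioc t0 t ⊆ Ioc 0 T := Ioc_subset_Ioc h0 h2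
  have key : ∀ k, (ENNReal.ofReal (rt k ^ (σ + 7/4)) *
      ‖(y t - heatS ν (t - t0) (y t0)) k‖ₑ) ^ 2 ≤
      ∫⁻ s in Ioc t0 t, ENNReal.ofReal (ν ^ (-(7/4) : ℝ)) * ENNReal.ofReal ((t - s) ^ (-(3/4) : ℝ)) *
        (ENNReal.ofReal (rt k ^ σ) * ‖g s k‖ₑ) ^ 2 := by
    intro k
    have hl := lam_pos k
    rw [mul_pow, sq_ofReal_rt]
    refine (mul_le_mul' le_rfl (h.star hν h0 h1 h2 k)).trans ?_
    rw [← mul_assoc, ← ENNReal.ofReal_mul (by positivity),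
      ← lintegral_const_mul' _ _ ENNReal.ofReal_ne_top]
    rw [← restrict_Ioo_eq_restrict_Ioc]
    refine setLIntegral_mono' measurableSet_Ioo fun s hs => ?_
    rw [mul_pow, sq_ofReal_rt, ← mul_assoc, ← mul_assoc]
    refine mul_le_mul' ?_ le_rfl
    have hr : 0 < t - s := by linarith [hs.2]
    rw [← ENNReal.ofReal_mul (by positivity), ← ENNReal.ofReal_mul (by positivity),
      ← ENNReal.ofReal_mul (by positivity)]
    apply ENNReal.ofReal_le_ofReal
    have hb := exp_bound (x := ν * lam k * (t - s)) (by positivity)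
    rw [Real.mul_rpow (by positivity) hr.le, Real.mul_rpow hν.le hl.le] at hb
    have e1 : lam k ^ (σ + 7/4) * lam k ^ (-(3/4) : ℝ) = lam k ^ σ * lam k := by
      nth_rewrite 4 [← Real.rpow_one (lam k)]
      rw [← Real.rpow_add hl, ← Real.rpow_add hl]; congr 1; ring
    have e2 : ν ^ (-(3/4) : ℝ) = ν * ν ^ (-(7/4) : ℝ) := by
      nth_rewrite 2 [← Real.rpow_one ν]
      rw [← Real.rpow_add hν]; congr 1; norm_num
    calc lam k ^ (σ + 7/4) * (1 / (ν * lam k)) * Real.exp (-(ν * lam k * (t - s)))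
        ≤ lam k ^ (σ + 7/4) * (1 / (ν * lam k)) * (ν ^ (-(3/4) : ℝ) * lam k ^ (-(3/4) : ℝ) *
            (t - s) ^ (-(3/4) : ℝ)) := by gcongr
      _ = (lam k ^ (σ + 7/4) * lam k ^ (-(3/4) : ℝ)) * ν ^ (-(3/4) : ℝ) * (1 / (ν * lam k)) *
            (t - s) ^ (-(3/4) : ℝ) := by ring
      _ = _ := by rw [e1, e2]; field_simp
  unfold E
  refine (ENNReal.tsum_le_tsum key).trans ?_
  rw [← lintegral_tsum]
  · calc _ ≤ ∫⁻ s in Ioc t0 t, ENNReal.ofReal (ν ^ (-(7/4) : ℝ)) *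
          ENNReal.ofReal ((t - s) ^ (-(3/4) : ℝ)) * M := by
          refine setLIntegral_mono' measurableSet_Ioc fun s hs => ?_
          rw [ENNReal.tsum_mul_left]
          exact mul_le_mul' le_rfl (hM s hs)
      _ = ENNReal.ofReal (ν ^ (-(7/4) : ℝ)) *
          (∫⁻ s in Ioc t0 t, ENNReal.ofReal ((t - s) ^ (-(3/4) : ℝ))) * M := by
          have hme : Measurable (fun s : ℝ => ENNReal.ofReal ((t - s) ^ (-(3/4) : ℝ))) := by
            fun_prop
          rw [lintegral_mul_const _ (hme.const_mul _), lintegral_const_mul _ hme]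
      _ ≤ _ := by
          refine mul_le_mul' (mul_le_mul' le_rfl (lint_sing h0 h1 h2)) le_rfl
  · intro k
    have := ((h.meas_g k).mono_measure (Measure.restrict_mono hs le_rfl))
    have hme : Measurable (fun s : ℝ => ENNReal.ofReal (ν ^ (-(7/4) : ℝ)) *
        ENNReal.ofReal ((t - s) ^ (-(3/4) : ℝ))) := by fun_prop
    exact hme.aemeasurable.mul (((this.enorm).const_mul _).pow_const 2)

lemma energy (h : Duh ν T y g) (hν : 0 < ν) (σ : ℝ) {t : ℝ} (h0 : 0 ≤ t) (h2 : t ≤ T) :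
    E (σ + 1) (y t - heatS ν t (y 0)) ≤ ENNReal.ofReal (1 / ν) * ∫⁻ s in Ioc 0 t, E σ (g s) := by
  have hs : Ioc 0 t ⊆ Ioc 0 T := Ioc_subset_Ioc le_rfl h2
  have key : ∀ k, (ENNReal.ofReal (rt k ^ (σ + 1)) *
      ‖(y t - heatS ν t (y 0)) k‖ₑ) ^ 2 ≤
      ENNReal.ofReal (1 / ν) * ∫⁻ s in Ioc 0 t, (ENNReal.ofReal (rt k ^ σ) * ‖g s k‖ₑ) ^ 2 := by
    intro k
    have hl := lam_pos k
    have hst := h.star hν le_rfl h0 h2 k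
    rw [sub_zero] at hst
    simp only [mul_pow, sq_ofReal_rt]
    refine (mul_le_mul' le_rfl hst).trans ?_
    rw [lintegral_const_mul' _ _ ENNReal.ofReal_ne_top, ← mul_assoc, ← mul_assoc,
      ← ENNReal.ofReal_mul (by positivity), ← ENNReal.ofReal_mul (by positivity)]
    have e : lam k ^ (σ + 1) * (1 / (ν * lam k)) = 1 / ν * lam k ^ σ := by
      rw [Real.rpow_add hl, Real.rpow_one]; field_simp
    rw [e]
    refine mul_le_mul' le_rfl (setLIntegral_mono' measurableSet_Ioc fun s hs => ?_)
    refine (mul_le_mul' (ENNReal.ofReal_le_one.mpr ?_) le_rfl).trans_eq (one_mul _)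
    rw [Real.exp_le_one_iff]
    have : 0 ≤ ν * lam k * (t - s) := mul_nonneg (by positivity) (by linarith [hs.2])
    linarith
  unfold E
  refine (ENNReal.tsum_le_tsum key).trans ?_
  rw [ENNReal.tsum_mul_left, ← lintegral_tsum]
  intro k
  have := ((h.meas_g k).mono_measure (Measure.restrict_mono hs le_rfl))
  exact ((this.enorm).const_mul _).pow_const 2

lemma maxreg (h : Duh ν T y g) (hν : 0 < ν) (σ : ℝ) :
    ∫⁻ t in Ioc 0 T, E (σ + 2) (y t - heatS ν t (y 0)) ≤
      ENNReal.ofReal (1 / ν ^ 2) * ∫⁻ s in Ioc 0 T, E σ (g s) := by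
  have key : ∀ k, ∫⁻ t in Ioc 0 T, (ENNReal.ofReal (rt k ^ (σ + 2)) *
      ‖(y t - heatS ν t (y 0)) k‖ₑ) ^ 2 ≤
      ENNReal.ofReal (1 / ν ^ 2) * ∫⁻ s in Ioc 0 T, (ENNReal.ofReal (rt k ^ σ) * ‖g s k‖ₑ) ^ 2 := by
    intro k
    have hl := lam_pos k
    simp only [mul_pow, sq_ofReal_rt]
    rw [lintegral_const_mul' _ _ ENNReal.ofReal_ne_top,
      lintegral_const_mul' _ _ ENNReal.ofReal_ne_top]
    calc _ ≤ ENNReal.ofReal (lam k ^ (σ + 2)) * ∫⁻ t in Ioc 0 T,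
          ENNReal.ofReal (1 / (ν * lam k)) * ∫⁻ s in Ioc 0 t,
            ENNReal.ofReal (Real.exp (-(ν * lam k * (t - s)))) * ‖g s k‖ₑ ^ 2 := by
          refine mul_le_mul' le_rfl (setLIntegral_mono' measurableSet_Ioc fun t ht => ?_)
          have hst := h.star hν le_rfl ht.1.le ht.2 k
          rwa [sub_zero] at hst
      _ ≤ ENNReal.ofReal (lam k ^ (σ + 2)) * (ENNReal.ofReal (1 / (ν * lam k)) *
          (ENNReal.ofReal (1 / (ν * lam k)) * ∫⁻ s in Ioc 0 T, ‖g s k‖ₑ ^ 2)) := by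
          rw [lintegral_const_mul' _ _ ENNReal.ofReal_ne_top]
          refine mul_le_mul' le_rfl (mul_le_mul' le_rfl ?_)
          exact young_scalar (mul_pos hν hl) ((h.meas_g k).enorm.pow_const 2)
      _ = _ := by
          rw [← mul_assoc, ← mul_assoc, ← mul_assoc, ← ENNReal.ofReal_mul (by positivity),
            ← ENNReal.ofReal_mul (by positivity), ← ENNReal.ofReal_mul (by positivity)]
          congr 2
          rw [Real.rpow_add hl, Real.rpow_two]; field_simp
  unfold E
  rw [lintegral_tsum, lintegral_tsum]
  · rw [← ENNReal.tsum_mul_left]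
    exact ENNReal.tsum_le_tsum key
  · intro k
    exact (((h.meas_g k).enorm).const_mul _).pow_const 2
  · intro k
    exact ((((h.meas_y k).sub (meas_heat (y 0) k).aemeasurable).enorm).const_mul _).pow_const 2

end Duh

lemma heat_le {ν t : ℝ} (hν : 0 < ν) (ht : 0 ≤ t) (s : ℝ) (c : Coef) :
    E s (heatS ν t c) ≤ E s c := by
  unfold E
  refine ENNReal.tsum_le_tsum fun k => ?_
  gcongr
  unfold heatS
  rw [enorm_mul]
  refine (mul_le_mul' ?_ le_rfl).trans_eq (one_mul _)
  have hl := lam_pos k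
  rw [← ofReal_norm, Complex.norm_real, Real.norm_eq_abs, abs_of_pos (Real.exp_pos _)]
  apply ENNReal.ofReal_le_one.mpr
  rw [Real.exp_le_one_iff]
  have : 0 ≤ ν * lam k * t := by positivity
  linarith

/-- Instantaneous smoothing of the heat flow by two derivatives. -/
lemma heat_smooth {ν t1 : ℝ} (hν : 0 < ν) (ht1 : 0 < t1) : ∃ K : ℝ≥0∞, K ≠ ⊤ ∧
    ∀ t, t1 ≤ t → ∀ (s : ℝ) (c : Coef), E (s + 2) (heatS ν t c) ≤ K * E s c := by
  refine ⟨ENNReal.ofReal (1 / (ν * t1)) ^ 2, by simp, ?_⟩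
  intro t ht s c
  unfold E
  rw [← ENNReal.tsum_mul_left]
  refine ENNReal.tsum_le_tsum fun k => ?_
  rw [← mul_pow]
  refine pow_le_pow_left' ?_ 2
  unfold heatS
  have hl := lam_pos k
  have hr := rt_pos k
  rw [enorm_mul, ← mul_assoc, ← mul_assoc, ← ofReal_norm, Complex.norm_real, Real.norm_eq_abs,
    abs_of_pos (Real.exp_pos _)]
  refine mul_le_mul' ?_ le_rfl
  rw [← ENNReal.ofReal_mul (by positivity), ← ENNReal.ofReal_mul (by positivity)]
  apply ENNReal.ofReal_le_ofReal
  rw [Real.rpow_add hr, Real.rpow_two, rt_sq]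
  have h1 : Real.exp (-(ν * lam k * t)) ≤ 1 / (ν * lam k * t1) := by
    rw [Real.exp_neg, one_div]
    apply inv_anti₀ (by positivity)
    have : ν * lam k * t1 ≤ ν * lam k * t := by gcongr
    linarith [Real.add_one_le_exp (ν * lam k * t)]
  calc rt k ^ s * lam k * Real.exp (-(ν * lam k * t))
      ≤ rt k ^ s * lam k * (1 / (ν * lam k * t1)) := by gcongr
    _ = _ := by field_simp

lemma heat_int {ν T : ℝ} (hν : 0 < ν) (hT : 0 ≤ T) (s : ℝ) (c : Coef) :
    ∫⁻ t in Ioc 0 T, E (s + 1) (heatS ν t c) ≤ ENNReal.ofReal (1 / ν) * E s c := by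
  unfold E
  rw [lintegral_tsum, ← ENNReal.tsum_mul_left]
  · refine ENNReal.tsum_le_tsum fun k => ?_
    have hl := lam_pos k
    simp only [mul_pow, Duh.sq_ofReal_rt, heatS, enorm_mul]
    calc _ ≤ ∫⁻ t in Ioc 0 T, ENNReal.ofReal (lam k ^ (s+1)) * ‖c k‖ₑ ^ 2 *
          ENNReal.ofReal (Real.exp (-((ν * lam k) * (t - 0)))) := by
          refine setLIntegral_mono' measurableSet_Ioc fun t ht => ?_
          rw [mul_comm (‖_‖ₑ ^ 2) (‖c k‖ₑ ^ 2), ← mul_assoc]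
          refine mul_le_mul' le_rfl ?_
          rw [← ofReal_norm, Complex.norm_real, Real.norm_eq_abs, abs_of_pos (Real.exp_pos _),
            sub_zero, ← ENNReal.ofReal_pow (Real.exp_pos _).le]
          apply ENNReal.ofReal_le_ofReal
          apply pow_le_of_le_one (Real.exp_pos _).le _ two_ne_zero
          rw [Real.exp_le_one_iff]
          have : 0 ≤ ν * lam k * t := mul_nonneg (by positivity) ht.1.le
          linarith
      _ ≤ ENNReal.ofReal (lam k ^ (s+1)) * ‖c k‖ₑ ^ 2 * ENNReal.ofReal (1 / (ν * lam k)) := by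
          rw [lintegral_const_mul _ (by fun_prop)]
          exact mul_le_mul' le_rfl (lint_exp2 (mul_pos hν hl) hT)
      _ = _ := by
          rw [mul_right_comm, ← ENNReal.ofReal_mul (by positivity), ← mul_assoc,
            ← ENNReal.ofReal_mul (by positivity)]
          congr 2
          rw [Real.rpow_add hl, Real.rpow_one]; field_simp
  · intro k
    exact (((Duh.meas_heat c k).enorm).const_mul _).pow_const 2 |>.aemeasurable

end Helpers2

end NS2D

namespace NS2D

section Helpers3
open scoped ENNReal

lemma contH_bdd {α T : ℝ} {u : ℝ → Coef} (hu : ContH α T u)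
    (hfin : ∀ t ∈ Icc (0:ℝ) T, E α (u t) ≠ ⊤) :
    ∃ M : ℝ≥0∞, M ≠ ⊤ ∧ ∀ t ∈ Icc (0:ℝ) T, E α (u t) ≤ M := by
  have key : ∃ M : ℝ≥0∞, M ≠ ⊤ ∧ ∀ t ∈ Icc (0:ℝ) T, t ∈ Icc (0:ℝ) T → E α (u t) ≤ M := by
    refine isCompact_Icc.induction_on
      (p := fun S => ∃ M : ℝ≥0∞, M ≠ ⊤ ∧ ∀ t ∈ S, t ∈ Icc (0:ℝ) T → E α (u t) ≤ M) ?_ ?_ ?_ ?_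
    · exact ⟨0, by simp, by simp⟩
    · rintro s t hst ⟨M, hM, h⟩
      exact ⟨M, hM, fun x hx => h x (hst hx)⟩
    · rintro s t ⟨M, hM, h⟩ ⟨M', hM', h'⟩
      refine ⟨max M M', by simp [hM, hM'], ?_⟩
      rintro x (hx | hx) hx'
      · exact (h x hx hx').trans (le_max_left _ _)
      · exact (h' x hx hx').trans (le_max_right _ _)
    · intro t ht
      obtain ⟨δ, hδ, hd⟩ := hu t ht 1 one_pos
      refine ⟨Icc 0 T ∩ Metric.ball t δ,
        inter_mem_nhdsWithin _ (Metric.ball_mem_nhds t hδ), 2 * (1 + E α (u t)), ?_, ?_⟩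
      · exact ENNReal.mul_ne_top (by simp) (by simp [hfin t ht])
      · rintro s ⟨hs, hsb⟩ -
        refine (E_of_sub α (u s) (u t)).trans ?_
        have h1 := hd s hs (by simpa [Real.dist_eq] using hsb)
        have hft : E α (u s - u t) ≠ ⊤ := by
          refine ne_top_of_le_ne_top ?_ (E_sub α (u s) (u t))
          exact ENNReal.mul_ne_top (by simp) (by simp [hfin t ht, hfin s hs])
        unfold hN at h1
        rw [Real.sqrt_lt' one_pos, hSq_eq, one_pow] at h1
        have h2 : E α (u s - u t) ≤ 1 := by
          rw [← ENNReal.ofReal_toReal hft]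
          exact ENNReal.ofReal_le_one.mpr h1.le
        gcongr
  obtain ⟨M, hM, h⟩ := key
  exact ⟨M, hM, fun t ht => h t ht ht⟩

lemma contH_cont {α T : ℝ} {u : ℝ → Coef} (hu : ContH α T u)
    (hfin : ∀ t ∈ Icc (0:ℝ) T, E α (u t) ≠ ⊤) (k : Freq) :
    ContinuousOn (fun t => u t k) (Icc 0 T) := by
  rw [Metric.continuousOn_iff]
  intro t ht ε hε
  have hr := rt_pos k
  obtain ⟨δ, hδ, hd⟩ := hu t ht (rt k ^ α * ε) (by positivity)
  refine ⟨δ, hδ, fun s hs hst => ?_⟩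
  have h1 := hd s hs (by simpa [Real.dist_eq] using hst)
  have hft : E α (u s - u t) ≠ ⊤ := by
    refine ne_top_of_le_ne_top ?_ (E_sub α (u s) (u t))
    exact ENNReal.mul_ne_top (by simp) (by simp [hfin t ht, hfin s hs])
  have hsum : FinH α (u s - u t) := (finH_iff _ _).mpr hft
  have h2 : lam k ^ α * ‖(u s - u t) k‖ ^ 2 ≤ hSq α (u s - u t) :=
    hsum.le_tsum k (fun j _ => by have := lam_pos j; positivity)
  rw [← rt_rpow_sq, ← mul_pow] at h2
  have h3 : rt k ^ α * ‖(u s - u t) k‖ ≤ hN α (u s - u t) := Real.le_sqrt_of_sq_le h2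
  have h4 := h3.trans_lt h1
  rw [dist_eq_norm]
  exact lt_of_mul_lt_mul_left h4 (by positivity)

/-- Bounded in `Ḣ^s` on `[t1,T]`. -/
def Bdd (s t1 T : ℝ) (y : ℝ → Coef) : Prop :=
  ∃ M : ℝ≥0∞, M ≠ ⊤ ∧ ∀ t ∈ Icc t1 T, E s (y t) ≤ M

lemma Bdd.mono {s s' t1 T : ℝ} {y : ℝ → Coef} (h : Bdd s t1 T y) (hs : s' ≤ s) :
    Bdd s' t1 T y := by
  obtain ⟨M, hM, h⟩ := h
  exact ⟨M, hM, fun t ht => (E_mono hs _).trans (h t ht)⟩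

lemma Bdd.mono_t {s t1 t2 T : ℝ} {y : ℝ → Coef} (h : Bdd s t1 T y) (hs : t1 ≤ t2) :
    Bdd s t2 T y := by
  obtain ⟨M, hM, h⟩ := h
  exact ⟨M, hM, fun t ht => h t ⟨hs.trans ht.1, ht.2⟩⟩

lemma Bdd.add {s t1 T : ℝ} {y z : ℝ → Coef} (h : Bdd s t1 T y) (h' : Bdd s t1 T z) :
    Bdd s t1 T (fun t => y t + z t) := by
  obtain ⟨M, hM, h⟩ := h
  obtain ⟨M', hM', h'⟩ := h'
  refine ⟨2 * (M + M'), ENNReal.mul_ne_top (by simp) (by simp [hM, hM']), fun t ht => ?_⟩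
  refine (E_add s _ _).trans ?_
  have := h t ht
  have := h' t ht
  gcongr

lemma Bdd.neg {s t1 T : ℝ} {y : ℝ → Coef} (h : Bdd s t1 T y) :
    Bdd s t1 T (fun t => - y t) := by
  obtain ⟨M, hM, h⟩ := h
  exact ⟨M, hM, fun t ht => by rw [E_neg]; exact h t ht⟩

lemma Bdd.Bc {C τ p q t1 T : ℝ} {y z : ℝ → Coef} (hw : WI C τ p q) (hC : 0 ≤ C)
    (h : Bdd p t1 T y) (h' : Bdd q t1 T z) :
    Bdd (τ - 1) t1 T (fun t => Bc (y t) (z t)) := by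
  obtain ⟨K, hK, hB⟩ := Bc_bound hw hC
  obtain ⟨M, hM, h⟩ := h
  obtain ⟨M', hM', h'⟩ := h'
  refine ⟨K * (M * M'), ENNReal.mul_ne_top hK (ENNReal.mul_ne_top hM hM'), fun t ht => ?_⟩
  refine (hB _ _).trans ?_
  have := h t ht
  have := h' t ht
  gcongr

lemma Duh.step_glob {ν T σ : ℝ} {y g : ℝ → Coef} (h : Duh ν T y g) (hν : 0 < ν)
    (hg : Bdd σ 0 T g) (h0 : E (σ + 7/4) (y 0) ≠ ⊤) : Bdd (σ + 7/4) 0 T y := by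
  obtain ⟨K, hK, hs⟩ := Duh.smoothing hν T
  obtain ⟨M, hM, hg⟩ := hg
  refine ⟨2 * (K * M + E (σ + 7/4) (y 0)), ?_, fun t ht => ?_⟩
  · exact ENNReal.mul_ne_top (by simp)
      (ENNReal.add_ne_top.mpr ⟨ENNReal.mul_ne_top hK hM, h0⟩)
  · refine (E_of_sub _ (y t) (heatS ν (t - 0) (y 0))).trans ?_
    refine mul_le_mul' le_rfl (add_le_add ?_ ?_)
    · exact hs y g h σ 0 t M le_rfl ht.1 ht.2 fun s hs => hg s ⟨hs.1.le, hs.2.trans ht.2⟩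
    · exact heat_le hν (by linarith [ht.1]) _ _

lemma Duh.step_loc {ν T σ s0 t0 t1 : ℝ} {y g : ℝ → Coef} (h : Duh ν T y g) (hν : 0 < ν)
    (ht0 : 0 ≤ t0) (ht1 : t0 < t1) (hσ : σ + 7/4 ≤ s0 + 2)
    (hg : Bdd σ t0 T g) (h0 : E s0 (y t0) ≠ ⊤) : Bdd (σ + 7/4) t1 T y := by
  obtain ⟨K, hK, hs⟩ := Duh.smoothing hν T
  obtain ⟨K', hK', hs'⟩ := heat_smooth hν (sub_pos.mpr ht1)
  obtain ⟨M, hM, hg⟩ := hg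
  refine ⟨2 * (K * M + K' * E s0 (y t0)), ?_, fun t ht => ?_⟩
  · exact ENNReal.mul_ne_top (by simp)
      (ENNReal.add_ne_top.mpr ⟨ENNReal.mul_ne_top hK hM, ENNReal.mul_ne_top hK' h0⟩)
  · refine (E_of_sub _ (y t) (heatS ν (t - t0) (y t0))).trans ?_
    refine mul_le_mul' le_rfl (add_le_add ?_ ?_)
    · exact hs y g h σ t0 t M ht0 (by linarith [ht.1]) ht.2
        fun s hs => hg s ⟨hs.1.le, hs.2.trans ht.2⟩
    · exact (E_mono hσ _).trans (hs' _ (by linarith [ht.1]) _ _)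

/-- Grönwall in integral form. -/
lemma gron {φ : ℝ → ℝ≥0∞} {T : ℝ} {K A N0 : ℝ≥0∞} (hK : K ≠ ⊤) (hN0 : N0 ≠ ⊤)
    (hb : ∀ t ∈ Icc (0:ℝ) T, φ t ≤ N0)
    (h : ∀ t ∈ Icc (0:ℝ) T, φ t ≤ A + K * ∫⁻ s in Ioc 0 t, φ s) :
    ∀ t ∈ Icc (0:ℝ) T, φ t ≤ ENNReal.ofReal (Real.exp ((2 * K.toReal + 1) * T)) * (2 * A) := by
  set γ : ℝ := 2 * K.toReal + 1 with hγ
  have hγ0 : 0 < γ := by positivity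
  set N : ℝ≥0∞ := ⨆ t : Icc (0:ℝ) T, ENNReal.ofReal (Real.exp (-(γ * t))) * φ t with hN
  have hle1 : ∀ t ∈ Icc (0:ℝ) T, ENNReal.ofReal (Real.exp (-(γ * t))) ≤ 1 := by
    intro t ht
    apply ENNReal.ofReal_le_one.mpr
    rw [Real.exp_le_one_iff]
    have := mul_nonneg hγ0.le ht.1
    linarith
  have hNtop : N ≠ ⊤ := by
    refine ne_top_of_le_ne_top hN0 (iSup_le fun t => ?_)
    calc _ ≤ 1 * N0 := mul_le_mul' (hle1 t t.2) (hb t t.2)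
      _ = N0 := one_mul _
  have hinv : ∀ t : ℝ, ENNReal.ofReal (Real.exp (γ * t)) * ENNReal.ofReal (Real.exp (-(γ * t))) = 1 := by
    intro t
    rw [← ENNReal.ofReal_mul (Real.exp_pos _).le, ← Real.exp_add]; simp
  have hφ : ∀ t ∈ Icc (0:ℝ) T, φ t ≤ ENNReal.ofReal (Real.exp (γ * t)) * N := by
    intro t ht
    calc φ t = ENNReal.ofReal (Real.exp (γ * t)) *
          (ENNReal.ofReal (Real.exp (-(γ * t))) * φ t) := by rw [← mul_assoc, hinv, one_mul]
      _ ≤ _ := mul_le_mul' le_rfl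
          (le_iSup (fun t : Icc (0:ℝ) T => ENNReal.ofReal (Real.exp (-(γ * t))) * φ t) ⟨t, ht⟩)
  have hKγ : K * ENNReal.ofReal (1 / γ) ≤ 1 / 2 := by
    rw [← ENNReal.ofReal_toReal hK, ← ENNReal.ofReal_mul ENNReal.toReal_nonneg]
    have : (1 / 2 : ℝ≥0∞) = ENNReal.ofReal (1 / 2) := by
      rw [ENNReal.ofReal_div_of_pos (by norm_num)]; simp
    rw [this]
    apply ENNReal.ofReal_le_ofReal
    rw [mul_one_div, div_le_div_iff₀ hγ0 (by norm_num)]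
    linarith
  have hNle : N ≤ A + N / 2 := by
    refine iSup_le fun ⟨t, ht⟩ => ?_
    have hint : ENNReal.ofReal (Real.exp (-(γ * t))) * ∫⁻ s in Ioc 0 t, φ s ≤
        ENNReal.ofReal (1 / γ) * N := by
      rw [← lintegral_const_mul' _ _ ENNReal.ofReal_ne_top]
      calc _ ≤ ∫⁻ s in Ioc 0 t, ENNReal.ofReal (Real.exp (-(γ * (t - s)))) * N := by
            refine setLIntegral_mono' measurableSet_Ioc fun s hs => ?_
            refine (mul_le_mul' le_rfl (hφ s ⟨hs.1.le, hs.2.trans ht.2⟩)).trans_eq ?_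
            rw [← mul_assoc, ← ENNReal.ofReal_mul (Real.exp_pos _).le, ← Real.exp_add]
            congr 3; ring
        _ ≤ _ := by
            have hme : Measurable (fun s : ℝ => ENNReal.ofReal (Real.exp (-(γ * (t - s))))) := by
              fun_prop
            rw [lintegral_mul_const _ hme]
            exact mul_le_mul' (lint_exp1 hγ0 ht.1) le_rfl
    calc ENNReal.ofReal (Real.exp (-(γ * t))) * φ t
        ≤ ENNReal.ofReal (Real.exp (-(γ * t))) * (A + K * ∫⁻ s in Ioc 0 t, φ s) :=
          mul_le_mul' le_rfl (h t ht)
      _ = ENNReal.ofReal (Real.exp (-(γ * t))) * A +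
          K * (ENNReal.ofReal (Real.exp (-(γ * t))) * ∫⁻ s in Ioc 0 t, φ s) := by ring
      _ ≤ 1 * A + K * (ENNReal.ofReal (1 / γ) * N) :=
          add_le_add (mul_le_mul' (hle1 t ht) le_rfl) (mul_le_mul' le_rfl hint)
      _ = A + (K * ENNReal.ofReal (1 / γ)) * N := by ring
      _ ≤ A + (1 / 2) * N := add_le_add le_rfl (mul_le_mul' hKγ le_rfl)
      _ = A + N / 2 := by rw [mul_comm, mul_one_div]
  have hN2 : N / 2 ≤ A := by
    have h2 : N / 2 ≠ ⊤ := ENNReal.div_ne_top hNtop (by simp)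
    rw [← ENNReal.add_halves N] at hNle
    rw [ENNReal.add_halves N] at hNle
    have : N / 2 + N / 2 ≤ A + N / 2 := by rwa [ENNReal.add_halves]
    exact (ENNReal.add_le_add_iff_right h2).mp this
  have hN3 : N ≤ 2 * A := by
    rw [← ENNReal.add_halves N, two_mul]; exact add_le_add hN2 hN2
  intro t ht
  refine (hφ t ht).trans (mul_le_mul' ?_ hN3)
  apply ENNReal.ofReal_le_ofReal
  rw [Real.exp_le_exp]
  exact mul_le_mul_of_nonneg_left ht.2 hγ0.le

/-! ### Navier–Stokes trajectory -/

section NS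
variable {ν T b : ℝ} {θ f : Coef} {u : ℝ → Coef}

lemma ns_fin (hb : 2 ≤ b) (hθ : MemH b θ) (hu : IsNSSol ν f T θ u) :
    ∀ t ∈ Icc (0:ℝ) T, E 1 (u t) ≠ ⊤ := by
  intro t ht
  rcases eq_or_lt_of_le ht.1 with h | h
  · rw [← h, hu.init]
    exact ne_top_of_le_ne_top ((finH_iff _ _).mp hθ.2) (E_mono (by linarith) _)
  · exact ne_top_of_le_ne_top ((finH_iff _ _).mp (hu.memL2H2.1 t ⟨h, ht.2⟩).2)
      (E_mono (by norm_num) _)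

lemma ns_duh (hb : 2 ≤ b) (hθ : MemH b θ) (hu : IsNSSol ν f T θ u) :
    Duh ν T u (fun t => f + -(Bc (u t) (u t))) where
  cont := contH_cont hu.contH1 (ns_fin hb hθ hu)
  der := by
    intro k t ht
    have := hu.deriv k t ht
    have e : (f + -(Bc (u t) (u t))) k - ((ν * lam k : ℝ) : ℂ) * u t k =
      f k - ((ν * lam k : ℝ) : ℂ) * u t k - Bc (u t) (u t) k := by
        simp only [Pi.add_apply, Pi.neg_apply]; ring
    rw [e]; exact this

lemma ns_force {s t1 : ℝ} (hs : 1 ≤ s) (hsb : s ≤ b) (hf : MemH (b - 1) f)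
    (h : Bdd s t1 T u) : Bdd (s - 3/2) t1 T (fun t => f + -(Bc (u t) (u t))) := by
  refine Bdd.add ⟨E (b - 1) f, (finH_iff _ _).mp hf.2, fun t _ => E_mono (by linarith) _⟩ ?_
  refine Bdd.neg ?_
  have := Bdd.Bc (wi_B hs) (by positivity) h h
  convert this using 1
  ring

lemma ns_glob (hν : 0 < ν) (hb : 2 ≤ b) (hθ : MemH b θ) (hf : MemH (b - 1) f)
    (hu : IsNSSol ν f T θ u) (n : ℕ) : 1 + (n:ℝ) / 4 ≤ b → Bdd (1 + (n:ℝ) / 4) 0 T u := by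
  induction n with
  | zero =>
    intro _
    have := contH_bdd hu.contH1 (ns_fin hb hθ hu)
    simpa [Bdd] using this
  | succ n ih =>
    intro hn
    push_cast at hn ⊢
    have hn0 : (0:ℝ) ≤ n := n.cast_nonneg
    have h1 := ih (by linarith)
    have h2 := ns_force (by linarith) (by linarith) hf h1
    have e : 1 + (n:ℝ) / 4 - 3/2 + 7/4 = 1 + ((n:ℝ) + 1) / 4 := by ring
    have := (ns_duh hb hθ hu).step_glob hν h2 (by
      rw [hu.init, e]
      exact ne_top_of_le_ne_top ((finH_iff _ _).mp hθ.2) (E_mono hn _))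
    rwa [e] at this

lemma ns_loc (hν : 0 < ν) (hb : 2 ≤ b) (hθ : MemH b θ) (hf : MemH (b - 1) f)
    (hu : IsNSSol ν f T θ u) (h : Bdd b 0 T u) {t1 : ℝ} (ht1 : 0 < t1) :
    Bdd (b + 1/4) t1 T u := by
  have h2 := ns_force (by linarith) le_rfl hf h
  have := (ns_duh hb hθ hu).step_loc (s0 := b) hν le_rfl ht1 (by linarith) h2 (by
    rw [hu.init]; exact (finH_iff _ _).mp hθ.2)
  convert this using 1
  ring

end NS

section Lin
variable {ν T a b : ℝ} {ξ : Coef} {u U : ℝ → Coef}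

lemma lin_fin (hξ : MemH a ξ) (hU : IsLinSol ν u T ξ U) (hL : MemL2H (a + 1) T U) :
    ∀ t ∈ Icc (0:ℝ) T, E a (U t) ≠ ⊤ := by
  intro t ht
  rcases eq_or_lt_of_le ht.1 with h | h
  · rw [← h, hU.init]
    exact (finH_iff _ _).mp hξ.2
  · exact ne_top_of_le_ne_top ((finH_iff _ _).mp (hL.1 t ⟨h, ht.2⟩).2)
      (E_mono (by linarith) _)

lemma lin_duh (hξ : MemH a ξ) (hU : IsLinSol ν u T ξ U) (hc : ContH a T U)
    (hL : MemL2H (a + 1) T U) :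
    Duh ν T U (fun t => -(Bc (u t) (U t)) + -(Bc (U t) (u t))) where
  cont := contH_cont hc (lin_fin hξ hU hL)
  der := by
    intro k t ht
    have := hU.deriv k t ht
    have e : (-(Bc (u t) (U t)) + -(Bc (U t) (u t))) k - ((ν * lam k : ℝ) : ℂ) * U t k =
      (0 : Coef) k - ((ν * lam k : ℝ) : ℂ) * U t k - Bc (u t) (U t) k - Bc (U t) (u t) k := by
        simp only [Pi.add_apply, Pi.neg_apply, Pi.zero_apply]; ring
    rw [e]; exact this

lemma lin_step (hν : 0 < ν) {s : ℝ} (hb : 2 ≤ b) (hs : |s| ≤ b + 1/4)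
    (hD : Duh ν T U (fun t => -(Bc (u t) (U t)) + -(Bc (U t) (u t))))
    (hu : ∀ t1, 0 < t1 → Bdd (b + 1/4) t1 T u)
    (h : ∀ t1, 0 < t1 → Bdd s t1 T U) : ∀ t1, 0 < t1 → Bdd (s + 3/4) t1 T U := by
  intro t1 ht1
  by_cases hT : t1 / 2 ≤ T
  swap
  · exact ⟨0, by simp, fun t ht => by exfalso; linarith [ht.1, ht.2]⟩
  have ht0 : 0 < t1 / 2 := by linarith
  have hw : WI (2 ^ (b + 1/4)) s (b + 1/4) s := wi_A hs (by linarith)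
  have hg : Bdd (s - 1) (t1 / 2) T (fun t => -(Bc (u t) (U t)) + -(Bc (U t) (u t))) :=
    Bdd.add (Bdd.neg (Bdd.Bc hw (by positivity) (hu _ ht0) (h _ ht0)))
      (Bdd.neg (Bdd.Bc hw.symm (by positivity) (h _ ht0) (hu _ ht0)))
  obtain ⟨M, hM, hh⟩ := h _ ht0
  have := hD.step_loc (s0 := s) hν ht0.le (by linarith : t1 / 2 < t1) (by linarith) hg
    (ne_top_of_le_ne_top hM (hh _ ⟨le_rfl, hT⟩))
  convert this using 1
  ring

lemma lin_loc (hν : 0 < ν) (hb : 2 ≤ b) (hab : |a| + 1 ≤ b)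
    (hD : Duh ν T U (fun t => -(Bc (u t) (U t)) + -(Bc (U t) (u t))))
    (hu : ∀ t1, 0 < t1 → Bdd (b + 1/4) t1 T u)
    (h : Bdd a 0 T U) : ∀ t1, 0 < t1 → Bdd (a + 2) t1 T U := by
  have ha := abs_le.mp (show |a| ≤ b - 1 by linarith)
  have h1 := lin_step hν hb (by linarith) hD hu (fun t1 ht1 => h.mono_t ht1.le)
  have h2 := lin_step hν hb (abs_le.mpr ⟨by linarith, by linarith⟩) hD hu h1
  have h3 := lin_step (s := a + 5/4) hν hb (abs_le.mpr ⟨by linarith, by linarith⟩) hD hu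
    (fun t1 ht1 => (h2 t1 ht1).mono (by linarith))
  intro t1 ht1
  exact (h3 t1 ht1).mono (by linarith)

lemma lin_force {τ : ℝ} (hb : 2 ≤ b) (hτ : |τ| ≤ b) (hu : Bdd b 0 T u) :
    ∃ K : ℝ≥0∞, K ≠ ⊤ ∧ ∀ U : ℝ → Coef, ∀ t ∈ Icc (0:ℝ) T,
      E (τ - 1) (-(Bc (u t) (U t)) + -(Bc (U t) (u t))) ≤ K * E τ (U t) := by
  have hw : WI (2 ^ b) τ b τ := wi_A hτ (by linarith)
  obtain ⟨K1, hK1, h1⟩ := Bc_bound hw (by positivity)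
  obtain ⟨K2, hK2, h2⟩ := Bc_bound hw.symm (by positivity)
  obtain ⟨M, hM, hu⟩ := hu
  refine ⟨2 * (K1 * M + K2 * M), ?_, fun U t ht => ?_⟩
  · exact ENNReal.mul_ne_top (by simp)
      (ENNReal.add_ne_top.mpr ⟨ENNReal.mul_ne_top hK1 hM, ENNReal.mul_ne_top hK2 hM⟩)
  · refine (E_add _ _ _).trans ?_
    rw [E_neg, E_neg]
    have hM' := hu t ht
    calc _ ≤ 2 * (K1 * (E b (u t) * E τ (U t)) + K2 * (E τ (U t) * E b (u t))) :=
          mul_le_mul' le_rfl (add_le_add (h1 _ _) (h2 _ _))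
      _ ≤ 2 * (K1 * (M * E τ (U t)) + K2 * (E τ (U t) * M)) := by gcongr
      _ = _ := by ring

lemma lin_main (hT : 0 < T) (hν : 0 < ν) (hb : 2 ≤ b) (hab : |a| + 1 ≤ b) (hu : Bdd b 0 T u) :
    ∃ C : ℝ≥0∞, C ≠ ⊤ ∧ ∀ (ξ : Coef) (U : ℝ → Coef), MemH a ξ → IsLinSol ν u T ξ U →
      ContH a T U → MemL2H (a + 1) T U →
      ∫⁻ t in Ioc 0 T, E (a + 2) (U t - heatS ν t ξ) ≤ C * E a ξ := by
  have ha := abs_le.mp (show |a| ≤ b - 1 by linarith)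
  obtain ⟨K1, hK1, h1⟩ := lin_force (τ := a) hb (by linarith) hu
  obtain ⟨K2, hK2, h2⟩ := lin_force (τ := a + 1) hb (abs_le.mpr ⟨by linarith, by linarith⟩) hu
  set Q : ℝ≥0∞ := 2 * (ENNReal.ofReal (1 / ν) * K1) with hQ
  have hQt : Q ≠ ⊤ := ENNReal.mul_ne_top (by simp) (ENNReal.mul_ne_top (by simp) hK1)
  set G : ℝ≥0∞ := ENNReal.ofReal (Real.exp ((2 * Q.toReal + 1) * T)) with hG
  set R : ℝ≥0∞ := ENNReal.ofReal (1 / ν ^ 2) with hR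
  refine ⟨R * (K2 * (2 * (R * (K1 * (ENNReal.ofReal T * (G * (2 * 2)))) +
    ENNReal.ofReal (1 / ν)))), ?_, ?_⟩
  · have hRt : R ≠ ⊤ := ENNReal.ofReal_ne_top
    have hGt : G ≠ ⊤ := ENNReal.ofReal_ne_top
    have h22 : (2 * 2 : ℝ≥0∞) ≠ ⊤ := ENNReal.mul_ne_top (by simp) (by simp)
    refine ENNReal.mul_ne_top hRt (ENNReal.mul_ne_top hK2 (ENNReal.mul_ne_top (by simp) ?_))
    refine ENNReal.add_ne_top.mpr ⟨?_, by simp⟩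
    exact ENNReal.mul_ne_top hRt (ENNReal.mul_ne_top hK1 (ENNReal.mul_ne_top (by simp)
      (ENNReal.mul_ne_top hGt h22)))
  intro ξ U hξ hU hc hL
  have hD := lin_duh hξ hU hc hL
  have h0 : U 0 = ξ := hU.init
  obtain ⟨N0, hN0, hbd⟩ := contH_bdd hc (lin_fin hξ hU hL)
  -- Grönwall step
  have hgr : ∀ t ∈ Icc (0:ℝ) T, E a (U t) ≤ G * (2 * (2 * E a ξ)) := by
    refine gron hQt hN0 hbd fun t ht => ?_
    have hen := hD.energy hν (a - 1) ht.1 ht.2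
    rw [h0, sub_add_cancel] at hen
    calc E a (U t) ≤ 2 * (E a (U t - heatS ν t ξ) + E a (heatS ν t ξ)) := E_of_sub _ _ _
      _ ≤ 2 * (ENNReal.ofReal (1 / ν) * (∫⁻ s in Ioc 0 t, K1 * E a (U s)) + E a ξ) := by
          refine mul_le_mul' le_rfl (add_le_add (hen.trans ?_) (heat_le hν ht.1 _ _))
          refine mul_le_mul' le_rfl (setLIntegral_mono' measurableSet_Ioc fun s hs => ?_)
          exact h1 U s ⟨hs.1.le, hs.2.trans ht.2⟩
      _ = _ := by rw [lintegral_const_mul' _ _ hK1, hQ]; ring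
  have hi0 : ∫⁻ t in Ioc 0 T, E a (U t) ≤ ENNReal.ofReal T * (G * (2 * 2)) * E a ξ := by
    calc _ ≤ ∫⁻ t in Ioc 0 T, G * (2 * (2 * E a ξ)) :=
          setLIntegral_mono' measurableSet_Ioc fun t ht => hgr t ⟨ht.1.le, ht.2⟩
      _ = _ := by
          rw [setLIntegral_const, Real.volume_Ioc, sub_zero]; ring
  have hi1 : ∫⁻ t in Ioc 0 T, E (a + 1) (U t) ≤
      2 * (R * (K1 * (ENNReal.ofReal T * (G * (2 * 2)))) + ENNReal.ofReal (1 / ν)) * E a ξ := by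
    have hmr := hD.maxreg hν (a - 1)
    have e : a - 1 + 2 = a + 1 := by ring
    rw [h0, e] at hmr
    have hme := hD.meas_E (a + 1)
    rw [h0] at hme
    calc _ ≤ ∫⁻ t in Ioc 0 T, 2 * (E (a + 1) (U t - heatS ν t ξ) + E (a + 1) (heatS ν t ξ)) :=
          lintegral_mono fun t => E_of_sub _ _ _
      _ = 2 * ((∫⁻ t in Ioc 0 T, E (a + 1) (U t - heatS ν t ξ)) +
          ∫⁻ t in Ioc 0 T, E (a + 1) (heatS ν t ξ)) := by
          rw [lintegral_const_mul' _ _ (by simp), lintegral_add_left' hme]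
      _ ≤ 2 * (R * (K1 * (ENNReal.ofReal T * (G * (2 * 2)) * E a ξ)) +
          ENNReal.ofReal (1 / ν) * E a ξ) := by
          refine mul_le_mul' le_rfl (add_le_add (hmr.trans ?_) (heat_int hν hT.le _ _))
          refine mul_le_mul' le_rfl ?_
          refine le_trans ?_ (mul_le_mul' le_rfl hi0)
          rw [← lintegral_const_mul' _ _ hK1]
          exact setLIntegral_mono' measurableSet_Ioc fun t ht => h1 U t ⟨ht.1.le, ht.2⟩
      _ = _ := by ring
  have hmr := hD.maxreg hν a
  rw [h0] at hmr
  refine hmr.trans ?_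
  rw [mul_assoc, mul_assoc]
  refine mul_le_mul' le_rfl ?_
  refine le_trans ?_ (mul_le_mul' le_rfl hi1)
  rw [← lintegral_const_mul' _ _ hK2]
  refine setLIntegral_mono' measurableSet_Ioc fun t ht => ?_
  have := h2 U t ⟨ht.1.le, ht.2⟩
  rwa [add_sub_cancel_right] at this

end Lin

lemma isReal_heat {ν t : ℝ} {c : Coef} (h : IsReal c) : IsReal (heatS ν t c) := by
  intro k
  simp only [heatS, lam_fneg, h k, map_mul, Complex.conj_ofReal, mul_neg]

lemma isReal_sub {c d : Coef} (h : IsReal c) (h' : IsReal d) : IsReal (c - d) := by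
  intro k
  simp only [Pi.sub_apply, h k, h' k, map_sub]
  ring

end Helpers3

end NS2D

namespace NS2D

/-- Lemma `LemDiffUI`. For `a ∈ ℤ` and
`b = max{2, |a|+1}`, if `θ ∈ Ḣ^b_⋄` and `f ∈ Ḣ^{b−1}_⋄`, then the difference
`𝕀_θ − ℒ` between the linearised Navier–Stokes flow and the heat flow maps
`Ḣ^a_⋄` continuously into `L²([0,T], Ḣ^{a+2}_⋄)`: there is `C > 0` such that
for every `ξ ∈ Ḣ^a_⋄`, the trajectory `t ↦ 𝕀_θ[ξ](t) − S_t[ξ]` lies in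
`L²([0,T], Ḣ^{a+2}_⋄)` with
`‖𝕀_θ[ξ] − ℒ[ξ]‖_{L²([0,T],Ḣ^{a+2})} ≤ C ‖ξ‖_{Ḣ^a}`. -/
theorem statement16 (a : ℤ) (T ν : ℝ) (hT : 0 < T) (hν : 0 < ν)
    (θ f : Coef)
    (hθ : MemH ((max 2 (|a| + 1) : ℤ) : ℝ) θ)
    (hf : MemH (((max 2 (|a| + 1) : ℤ) : ℝ) - 1) f)
    (uθ : ℝ → Coef) (huθ : IsNSSol ν f T θ uθ) :
    ∃ C : ℝ, 0 < C ∧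
      ∀ (ξ : Coef) (U : ℝ → Coef), MemH (a : ℝ) ξ → IsLinSol ν uθ T ξ U →
        ContH (a : ℝ) T U → MemL2H ((a : ℝ) + 1) T U →
        MemL2H ((a : ℝ) + 2) T (fun t => U t - heatS ν t ξ) ∧
        IntervalIntegrable (fun t => hSq ((a : ℝ) + 2) (U t - heatS ν t ξ)) volume 0 T ∧
        Real.sqrt (∫ t in (0:ℝ)..T, hSq ((a : ℝ) + 2) (U t - heatS ν t ξ)) ≤
          C * hN (a : ℝ) ξ := by
  have hb2 : (2:ℝ) ≤ ((max 2 (|a| + 1) : ℤ) : ℝ) := by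
    exact_mod_cast le_max_left 2 (|a| + 1)
  have hab : |(a:ℝ)| + 1 ≤ ((max 2 (|a| + 1) : ℤ) : ℝ) := by
    have : ((|a| + 1 : ℤ) : ℝ) ≤ ((max 2 (|a| + 1) : ℤ) : ℝ) :=
      Int.cast_le.mpr (le_max_right 2 (|a| + 1))
    push_cast at this ⊢
    exact this
  have hbn : ∃ n : ℕ, 1 + (n:ℝ) / 4 = ((max 2 (|a| + 1) : ℤ) : ℝ) := by
    have h2 : (2:ℤ) ≤ max 2 (|a| + 1) := le_max_left _ _
    refine ⟨(4 * (max 2 (|a| + 1) - 1)).toNat, ?_⟩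
    have h3 : (((4 * (max 2 (|a| + 1) - 1)).toNat : ℤ) : ℝ) =
        ((4 * (max 2 (|a| + 1) - 1) : ℤ) : ℝ) := by
      rw [Int.toNat_of_nonneg (by linarith)]
    rw [Int.cast_natCast] at h3
    rw [h3]
    push_cast
    ring
  generalize ((max 2 (|a| + 1) : ℤ) : ℝ) = b at *
  generalize (a : ℝ) = α at *
  obtain ⟨n, hn⟩ := hbn
  have hub : Bdd b 0 T uθ := by
    have := ns_glob hν hb2 hθ hf huθ n hn.le
    rwa [hn] at this
  obtain ⟨C, hC, hmain⟩ := lin_main hT hν hb2 hab hub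
  refine ⟨Real.sqrt C.toReal + 1, by positivity, ?_⟩
  intro ξ U hξ hU hc hL
  have hfin := hmain ξ U hξ hU hc hL
  have hEξ : E α ξ ≠ ⊤ := (finH_iff _ _).mp hξ.2
  have hD := lin_duh hξ hU hc hL
  have hloc := lin_loc hν hb2 hab hD (fun t1 ht1 => ns_loc hν hb2 hθ hf huθ hub ht1)
    (contH_bdd hc (lin_fin hξ hU hL))
  have hmem : ∀ t ∈ Ioc (0:ℝ) T, MemH (α + 2) (U t - heatS ν t ξ) := by
    intro t ht
    refine ⟨isReal_sub (hU.real t ⟨ht.1.le, ht.2⟩) (isReal_heat hξ.1), ?_⟩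
    rw [finH_iff]
    obtain ⟨M, hM, hUt⟩ := hloc t ht.1
    obtain ⟨K, hK, hh⟩ := heat_smooth hν ht.1
    refine ne_top_of_le_ne_top ?_ (E_sub _ _ _)
    refine ENNReal.mul_ne_top (by simp) (ENNReal.add_ne_top.mpr ⟨?_, ?_⟩)
    · exact ne_top_of_le_ne_top hM (hUt t ⟨le_rfl, ht.2⟩)
    · exact ne_top_of_le_ne_top (ENNReal.mul_ne_top hK hEξ) (hh t le_rfl α ξ)
  have hne : ∫⁻ t in Ioc 0 T, E (α + 2) (U t - heatS ν t ξ) ≠ ⊤ :=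
    ne_top_of_le_ne_top (ENNReal.mul_ne_top hC hEξ) hfin
  have hme : AEMeasurable (fun t => E (α + 2) (U t - heatS ν t ξ))
      (volume.restrict (Ioc 0 T)) := by
    have := hD.meas_E (α + 2)
    rwa [hU.init] at this
  have hint : IntegrableOn (fun t => hSq (α + 2) (U t - heatS ν t ξ)) (Ioc 0 T) := by
    simp only [hSq_eq]
    exact integrable_toReal_of_lintegral_ne_top hme hne
  refine ⟨⟨hmem, hint⟩, (intervalIntegrable_iff_integrableOn_Ioc_of_le hT.le).mpr hint, ?_⟩
  have hbound : ∫ t in (0:ℝ)..T, hSq (α + 2) (U t - heatS ν t ξ) ≤ C.toReal * hSq α ξ := by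
    rw [intervalIntegral.integral_of_le hT.le]
    simp only [hSq_eq]
    rw [integral_toReal hme (ae_lt_top' hme hne), ← ENNReal.toReal_mul]
    exact ENNReal.toReal_mono (ENNReal.mul_ne_top hC hEξ) hfin
  refine (Real.sqrt_le_sqrt hbound).trans ?_
  rw [Real.sqrt_mul ENNReal.toReal_nonneg]
  unfold hN
  have := Real.sqrt_nonneg (hSq α ξ)
  nlinarith

end NS2D
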